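/- arXiv:math/0003123 — 2 statements merged into one kernel-verified Lean document; each statement's English description precedes it below -/
import Mathlib

section
/- Let p be a parabolic subalgebra of a finite-dimensional complex semisimple Lie algebra g, with nilpotent radical n. (i) Every Cartan subalgebra j of p is a Cartan subalgebra of g, and there exists a unique Langlands decomposition p = l ⊕ n such that j ⊆ l. (ii) Any two Cartan subalgebras j, j' of g contained in p are conjugate by an element of the analytic subgroup P with Lie algebra p, and this element conjugates the corresponding subalgebras l and l'. (iii) For any Langlands decomposition p = l ⊕ n, every Cartan subalgebra of l is a Cartan subalgebra of g. -/
open Module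

namespace ManinPaper

variable (g : Type*) [LieRing g] [LieAlgebra ℝ g] [LieAlgebra ℂ g] [IsScalarTower ℝ ℂ g]
  [FiniteDimensional ℂ g] [FiniteDimensional ℝ g]

/-! ### Subalgebras of `g`, given as subspaces -/

def IsSub (V : Submodule ℂ g) : Prop := ∀ x ∈ V, ∀ y ∈ V, ⁅x, y⁆ ∈ V

def IsSubR (V : Submodule ℝ g) : Prop := ∀ x ∈ V, ∀ y ∈ V, ⁅x, y⁆ ∈ V

/-- The span of all brackets. -/
def bracketSpan (V W : Submodule ℂ g) : Submodule ℂ g :=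
  Submodule.span ℂ {z : g | ∃ x ∈ V, ∃ y ∈ W, ⁅x, y⁆ = z}

def bracketSpanR (V W : Submodule ℝ g) : Submodule ℝ g :=
  Submodule.span ℝ {z : g | ∃ x ∈ V, ∃ y ∈ W, ⁅x, y⁆ = z}

/-- Derived series of a subalgebra (given as a subspace). -/
def derivedSub (V : Submodule ℂ g) : ℕ → Submodule ℂ g
  | 0 => V
  | k + 1 => bracketSpan g (derivedSub V k) (derivedSub V k)

def derivedSubR (V : Submodule ℝ g) : ℕ → Submodule ℝ g
  | 0 => V
  | k + 1 => bracketSpanR g (derivedSubR V k) (derivedSubR V k)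

/-- Lower central series. -/
def lcsSub (V : Submodule ℂ g) : ℕ → Submodule ℂ g
  | 0 => V
  | k + 1 => bracketSpan g V (lcsSub V k)

def lcsSubR (V : Submodule ℝ g) : ℕ → Submodule ℝ g
  | 0 => V
  | k + 1 => bracketSpanR g V (lcsSubR V k)

def SolvableSub (V : Submodule ℂ g) : Prop := ∃ k, derivedSub g V k = ⊥

def SolvableSubR (V : Submodule ℝ g) : Prop := ∃ k, derivedSubR g V k = ⊥

def NilpotentSub (V : Submodule ℂ g) : Prop := ∃ k, lcsSub g V k = ⊥

def NilpotentSubR (V : Submodule ℝ g) : Prop := ∃ k, lcsSubR g V k = ⊥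

/-- `J` is an ideal of the subalgebra `V`. -/
def IsIdealIn (V J : Submodule ℂ g) : Prop :=
  J ≤ V ∧ ∀ x ∈ V, ∀ y ∈ J, ⁅x, y⁆ ∈ J

def IsIdealInR (V J : Submodule ℝ g) : Prop :=
  J ≤ V ∧ ∀ x ∈ V, ∀ y ∈ J, ⁅x, y⁆ ∈ J

/-- The radical (largest solvable ideal) of the subalgebra `V`. -/
def radicalIn (V : Submodule ℂ g) : Submodule ℂ g :=
  sSup {J : Submodule ℂ g | IsIdealIn g V J ∧ SolvableSub g J}

def radicalInR (V : Submodule ℝ g) : Submodule ℝ g :=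
  sSup {J : Submodule ℝ g | IsIdealInR g V J ∧ SolvableSubR g J}

/-- The nilpotent radical `[V,V] ⊓ rad V` of the subalgebra `V`; by Bourbaki, Ch. I §5.3,
this is the largest ideal of `V` whose elements act nilpotently in every finite-dimensional
representation of `V`. -/
def nilpotentRadIn (V : Submodule ℂ g) : Submodule ℂ g :=
  bracketSpan g V V ⊓ radicalIn g V

def nilpotentRadInR (V : Submodule ℝ g) : Submodule ℝ g :=
  bracketSpanR g V V ⊓ radicalInR g V

/-- The centre of the subalgebra `V`. -/
def centerIn (V : Submodule ℂ g) : Submodule ℂ g where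
  carrier := {z : g | z ∈ V ∧ ∀ y ∈ V, ⁅z, y⁆ = 0}
  zero_mem' := ⟨V.zero_mem, fun y _ => zero_lie y⟩
  add_mem' := by
    rintro a b ⟨ha, ha'⟩ ⟨hb, hb'⟩
    exact ⟨V.add_mem ha hb, fun y hy => by rw [add_lie, ha' y hy, hb' y hy, add_zero]⟩
  smul_mem' := by
    rintro c x ⟨hx, hx'⟩
    exact ⟨V.smul_mem c hx, fun y hy => by rw [smul_lie, hx' y hy, smul_zero]⟩

/-- The centralizer of a set. -/
def centralizerOf (s : Set g) : Submodule ℂ g where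
  carrier := {z : g | ∀ y ∈ s, ⁅z, y⁆ = 0}
  zero_mem' := fun y _ => zero_lie y
  add_mem' := by
    rintro a b ha hb
    exact fun y hy => by rw [add_lie, ha y hy, hb y hy, add_zero]
  smul_mem' := by
    rintro c x hx
    exact fun y hy => by rw [smul_lie, hx y hy, smul_zero]

/-- The derived (sub)algebra of `V`, as a subspace of `g`. -/
def derivedOf (V : Submodule ℂ g) : Submodule ℂ g := bracketSpan g V V

/-- A semisimple complex subalgebra: a subalgebra with trivial radical. -/
def SemisimpleSub (V : Submodule ℂ g) : Prop := IsSub g V ∧ radicalIn g V = ⊥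

/-- Borel subalgebras of the subalgebra `W`: maximal solvable subalgebras of `W`. -/
def IsBorelIn (W b : Submodule ℂ g) : Prop :=
  IsSub g b ∧ b ≤ W ∧ SolvableSub g b ∧
    ∀ b' : Submodule ℂ g, IsSub g b' → b' ≤ W → SolvableSub g b' → b ≤ b' → b' = b

/-- Parabolic subalgebras of `W`: subalgebras of `W` containing a Borel subalgebra of `W`. -/
def IsParabolicIn (W p : Submodule ℂ g) : Prop :=
  IsSub g p ∧ p ≤ W ∧ ∃ b : Submodule ℂ g, IsBorelIn g W b ∧ b ≤ p

/-- `l` is reductive in `W`: every `l`-invariant subspace of `W` admits an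
`l`-invariant complement in `W`. -/
def ReductiveIn (W l : Submodule ℂ g) : Prop :=
  ∀ U : Submodule ℂ g, U ≤ W → (∀ x ∈ l, ∀ u ∈ U, ⁅x, u⁆ ∈ U) →
    ∃ U' : Submodule ℂ g, U' ≤ W ∧ (∀ x ∈ l, ∀ u ∈ U', ⁅x, u⁆ ∈ U') ∧
      U ⊓ U' = ⊥ ∧ U ⊔ U' = W

/-- A Langlands decomposition `p = l ⊕ n` of the parabolic subalgebra `p` of `W`, where
`n` is the nilpotent radical of `p` and `l` is a subalgebra reductive in `W`. -/
def IsLanglandsIn (W p l : Submodule ℂ g) : Prop :=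
  IsSub g l ∧ l ≤ p ∧ ReductiveIn g W l ∧
    l ⊓ nilpotentRadIn g p = ⊥ ∧ l ⊔ nilpotentRadIn g p = p

/-- Cartan subalgebras of `W`: nilpotent and self-normalizing in `W`. -/
def IsCartanIn (W j : Submodule ℂ g) : Prop :=
  IsSub g j ∧ j ≤ W ∧ NilpotentSub g j ∧
    ∀ x ∈ W, (∀ y ∈ j, ⁅x, y⁆ ∈ j) → x ∈ j

def IsCartanInR (W j : Submodule ℝ g) : Prop :=
  IsSubR g j ∧ j ≤ W ∧ NilpotentSubR g j ∧
    ∀ x ∈ W, (∀ y ∈ j, ⁅x, y⁆ ∈ j) → x ∈ j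

/-- `g` is reductive: its radical coincides with its centre. -/
def IsReductive : Prop := radicalIn g ⊤ = centerIn g ⊤

/-- `b'` is the Borel subalgebra of `W` opposite to `b` relative to the Cartan
subalgebra `j`. -/
def IsOppositeBorelIn (W j b b' : Submodule ℂ g) : Prop :=
  IsBorelIn g W b' ∧ j ≤ b' ∧ b ⊓ b' = j

/-! ### Inner automorphisms -/

/-- Truncated exponential of an endomorphism; for a nilpotent endomorphism of `g` it
equals the exponential. -/
noncomputable def expEnd (f : Module.End ℂ g) : Module.End ℂ g :=
  ∑ i ∈ Finset.range (finrank ℂ g + 1), ((i.factorial : ℂ)⁻¹) • f ^ i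

/-- The group of inner automorphisms of the reductive complex Lie algebra `g`: the subgroup
of linear automorphisms generated by the exponentials of nilpotent inner derivations.  This
coincides with the image of the connected simply connected group `G` with Lie algebra `g`
under the adjoint action. -/
noncomputable def innerAut : Subgroup (g ≃ₗ[ℂ] g) :=
  Subgroup.closure {e : g ≃ₗ[ℂ] g | ∃ x : g,
    IsNilpotent (LieAlgebra.ad ℂ g x) ∧ (e : g →ₗ[ℂ] g) = expEnd g (LieAlgebra.ad ℂ g x)}

/-!
The nilpotent radical of a parabolic `p` is its orthogonal `p^⊥` for the Killing form: `p^⊥` lies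
in every Borel subalgebra `b ⊆ p`, by Lie's theorem and the maximality of `b`, and its elements are
ad-nilpotent, being Killing-orthogonal to the conjugates of their semisimple parts.
For a Cartan subalgebra `H` of `g` in `p`, the subspace `p` is a sum of root spaces of `H`, and
`g_α ⊆ p` lies in `p^⊥` exactly when `g_{-α}` is not in `p`. The only `H`-stable complement of
`p^⊥` in `p` is therefore the sum of the `g_α` such that `g_α` and `g_{-α}` both lie in `p`. It is
reductive in `g`, because the Killing orthogonal of the conjugate of a stable subspace `U`, for an
antilinear conjugation exchanging `g_α` and `g_{-α}`, is a stable complement of `U`.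

A nilpotent subalgebra that is its own normalizer in `p`, or in a Levi factor of `p`, equals its
own zero root space in `g`, hence is a Cartan subalgebra of `g`.

For the conjugacy, products of exponentials of root vectors of `p` sweep out a neighbourhood of a
regular element of `H`, by the inverse function theorem. The Cartan subalgebras attached to the
regular elements on a complex line in `p` are thus locally all conjugate, and the set of regular
elements is connected since its complement in the line is finite.
-/

section LieTheorem

open LieAlgebra LieModule

variable (K : Type*) {A : Type*} [Field K] [LieRing A] [LieAlgebra K A]

/-- The extension of the action of a Lie algebra `A` on a module `M` to noncommutative polynomials
in the elements of `A`. -/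
noncomputable def freeAction (M : Type*) [AddCommGroup M] [Module K M] [LieRingModule A M]
    [LieModule K A M] : FreeAlgebra K A →ₐ[K] End K M :=
  FreeAlgebra.lift K (toEnd K A M)

section

variable {K} {M : Type*} [AddCommGroup M] [Module K M] [LieRingModule A M] [LieModule K A M]

@[simp]
theorem freeAction_ι (x : A) : freeAction K M (FreeAlgebra.ι K x) = toEnd K A M x :=
  FreeAlgebra.lift_ι_apply _ _

theorem freeAction_apply_of_mem_weightSpace {χ : A → K} {v : M} (hv : v ∈ weightSpace M χ)
    (u : FreeAlgebra K A) : freeAction K M u v = FreeAlgebra.lift K χ u • v := by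
  induction u with
  | grade0 c => simp
  | grade1 x => simpa using (mem_weightSpace χ v).mp hv x
  | mul a b iha ihb => simp [iha, ihb, smul_smul, mul_comm]
  | add a b iha ihb => simp [iha, ihb, add_smul]

theorem freeAction_quotient_mk' (W : LieSubmodule K A M) (u : FreeAlgebra K A) (m : M) :
    freeAction K (M ⧸ W) u (LieSubmodule.Quotient.mk' W m) =
      LieSubmodule.Quotient.mk' W (freeAction K M u m) := by
  induction u generalizing m with
  | grade0 c => simp
  | grade1 x => simp
  | mul a b iha ihb => rw [map_mul, map_mul, End.mul_apply, End.mul_apply, ihb, iha]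
  | add a b iha ihb =>
    rw [map_add, map_add, LinearMap.add_apply, LinearMap.add_apply, iha, ihb, map_add]

theorem freeAction_isNilpotent_iff_of_quotient_span {χ : A → K} {v : M}
    (hv : v ∈ weightSpace M χ) (hv0 : v ≠ 0) {W : LieSubmodule K A M}
    (hW : W.toSubmodule = Submodule.span K {v}) (u : FreeAlgebra K A) :
    IsNilpotent (freeAction K M u) ↔
      FreeAlgebra.lift K χ u = 0 ∧ IsNilpotent (freeAction K (M ⧸ W) u) := by
  constructor
  · rintro ⟨k, hk⟩
    rw [← map_pow] at hk
    refine ⟨eq_zero_of_pow_eq_zero (n := k) ?_, k, LinearMap.ext fun m => ?_⟩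
    · simpa [hk, hv0] using (freeAction_apply_of_mem_weightSpace hv (u ^ k)).symm
    · obtain ⟨m, rfl⟩ := LieSubmodule.Quotient.surjective_mk' W m
      rw [← map_pow, freeAction_quotient_mk', hk]
      simp
  · rintro ⟨hχ, k, hk⟩
    refine ⟨k + 1, LinearMap.ext fun m => ?_⟩
    have hm : freeAction K M (u ^ k) m ∈ Submodule.span K {v} := by
      rw [← hW, LieSubmodule.mem_toSubmodule, ← LieSubmodule.Quotient.mk_eq_zero]
      rw [← freeAction_quotient_mk', map_pow, hk, LinearMap.zero_apply]
    obtain ⟨c, hc⟩ := Submodule.mem_span_singleton.mp hm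
    rw [pow_succ', Module.End.mul_apply, ← map_pow, ← hc, map_smul,
      freeAction_apply_of_mem_weightSpace hv, hχ, zero_smul, smul_zero, LinearMap.zero_apply]

end

variable (A) [IsAlgClosed K] [CharZero K] [IsSolvable A]

/-- Lie's theorem, in the form in which it controls nilpotency: the characters are the diagonal
entries of a simultaneous triangularization. -/
theorem exists_characters_isNilpotent_freeAction_iff (M : Type*) [AddCommGroup M] [Module K M]
    [LieRingModule A M] [LieModule K A M] [FiniteDimensional K M] :
    ∃ S : Set (FreeAlgebra K A →ₐ[K] K),
      ∀ u, IsNilpotent (freeAction K M u) ↔ ∀ χ ∈ S, χ u = 0 := by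
  induction hd : finrank K M generalizing M with
  | zero =>
    have := finrank_zero_iff.mp hd
    exact ⟨∅, fun u => ⟨fun _ _ h => h.elim, fun _ => ⟨1, Subsingleton.elim _ _⟩⟩⟩
  | succ d ih =>
    have : Nontrivial M := nontrivial_of_finrank_eq_succ hd
    obtain ⟨χ, hχ⟩ := exists_nontrivial_weightSpace_of_isSolvable K A M
    obtain ⟨⟨v, hv⟩, hv0⟩ := exists_ne (0 : weightSpace M χ)
    have hv0' : v ≠ 0 := fun h => hv0 (Subtype.ext h)
    let W : LieSubmodule K A M :=
      { Submodule.span K {v} with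
        lie_mem := by
          intro x m hm
          obtain ⟨c, rfl⟩ := Submodule.mem_span_singleton.mp hm
          rw [lie_smul, (mem_weightSpace (χ : A → K) v).mp hv x, smul_comm]
          exact Submodule.smul_mem _ _ hm }
    have hW : W.toSubmodule = Submodule.span K {v} := rfl
    have hdim : finrank K (M ⧸ W) = d := by
      have h1 := Submodule.finrank_quotient_add_finrank W.toSubmodule
      rw [hW, finrank_span_singleton hv0', hd] at h1
      exact Nat.succ_injective h1
    obtain ⟨S, hS⟩ := ih (M ⧸ W) hdim
    refine ⟨insert (FreeAlgebra.lift K χ) S, fun u => ?_⟩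
    rw [freeAction_isNilpotent_iff_of_quotient_span hv hv0' hW, hS, Set.forall_mem_insert]

variable {K A} {M : Type*} [AddCommGroup M] [Module K M] [LieRingModule A M] [LieModule K A M]
  [FiniteDimensional K M] {x y : A}

theorem isNilpotent_toEnd_mul_of_isSolvable (hx : IsNilpotent (toEnd K A M x)) :
    IsNilpotent (toEnd K A M x * toEnd K A M y) := by
  obtain ⟨S, hS⟩ := exists_characters_isNilpotent_freeAction_iff K A M
  rw [← freeAction_ι, hS] at hx
  rw [← freeAction_ι, ← freeAction_ι, ← map_mul, hS]
  exact fun χ hχ => by rw [map_mul, hx χ hχ, zero_mul]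

theorem isNilpotent_toEnd_lie_of_isSolvable : IsNilpotent (toEnd K A M ⁅x, y⁆) := by
  obtain ⟨S, hS⟩ := exists_characters_isNilpotent_freeAction_iff K A M
  have h : toEnd K A M ⁅x, y⁆ = freeAction K M
      (FreeAlgebra.ι K x * FreeAlgebra.ι K y - FreeAlgebra.ι K y * FreeAlgebra.ι K x) := by
    ext m
    simp
  rw [h, hS]
  exact fun χ _ => by rw [map_sub, map_mul, map_mul, mul_comm, sub_self]

theorem isNilpotent_toEnd_add_of_isSolvable (hx : IsNilpotent (toEnd K A M x))
    (hy : IsNilpotent (toEnd K A M y)) : IsNilpotent (toEnd K A M (x + y)) := by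
  obtain ⟨S, hS⟩ := exists_characters_isNilpotent_freeAction_iff K A M
  rw [← freeAction_ι, hS] at hx hy
  rw [map_add, ← freeAction_ι, ← freeAction_ι, ← map_add, hS]
  exact fun χ hχ => by rw [map_add, hx χ hχ, hy χ hχ, add_zero]

end LieTheorem

section Solvable

open LieAlgebra LieModule

variable {K L : Type*} [Field K] [LieRing L] [LieAlgebra K L]

theorem derivedSeries_one_le {A : Type*} [LieRing A] [LieAlgebra K A] {S : Submodule K A}
    (h : ∀ a b : A, ⁅a, b⁆ ∈ S) : (derivedSeries K A 1).toSubmodule ≤ S := by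
  rw [derivedSeries_def, derivedSeriesOfIdeal_succ, derivedSeriesOfIdeal_zero,
    LieSubmodule.lieIdeal_oper_eq_linear_span', Submodule.span_le]
  rintro _ ⟨a, -, b, -, rfl⟩
  exact h a b

theorem isSolvable_of_isSolvable_derivedSeries_one (K : Type*) {A : Type*} [Field K] [LieRing A]
    [LieAlgebra K A] (h : IsSolvable (derivedSeries K A 1)) : IsSolvable A := by
  obtain ⟨k, hk⟩ := IsSolvable.solvable K (derivedSeries K A 1)
  rw [LieIdeal.derivedSeries_eq_bot_iff] at hk
  refine IsSolvable.mk (R := K) (k := k + 1) ?_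
  rwa [derivedSeries_def, derivedSeriesOfIdeal_add]

theorem isSolvable_of_lie_mem (s t : LieSubalgebra K L) [IsSolvable s]
    (h : ∀ a ∈ t, ∀ b ∈ t, ⁅a, b⁆ ∈ s) : IsSolvable t := by
  have hD : (derivedSeries K t 1).toSubmodule ≤ s.toSubmodule.comap t.toSubmodule.subtype :=
    derivedSeries_one_le fun a b => h a a.2 b b.2
  let φ : derivedSeries K t 1 →ₗ⁅K⁆ s :=
    { toFun := fun y => ⟨y, hD y.2⟩
      map_add' := fun _ _ => rfl
      map_smul' := fun _ _ => rfl
      map_lie' := rfl }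
  have hφ : Function.Injective φ := fun a b hab =>
    Subtype.ext (Subtype.ext (congrArg (fun z : s => (z : L)) hab))
  exact isSolvable_of_isSolvable_derivedSeries_one K hφ.lieAlgebra_isSolvable

theorem lie_mem_of_mem_sup_span_singleton {s T : Submodule K L} {y : L}
    (hs : ∀ a ∈ s, ∀ b ∈ s, ⁅a, b⁆ ∈ T) (hy : ∀ a ∈ s, ⁅a, y⁆ ∈ T) {a b : L}
    (ha : a ∈ s ⊔ Submodule.span K {y}) (hb : b ∈ s ⊔ Submodule.span K {y}) : ⁅a, b⁆ ∈ T := by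
  obtain ⟨a', ha', _, ha₂, rfl⟩ := Submodule.mem_sup.mp ha
  obtain ⟨b', hb', _, hb₂, rfl⟩ := Submodule.mem_sup.mp hb
  obtain ⟨c, rfl⟩ := Submodule.mem_span_singleton.mp ha₂
  obtain ⟨d, rfl⟩ := Submodule.mem_span_singleton.mp hb₂
  have hlie : ⁅a' + c • y, b' + d • y⁆ = ⁅a', b'⁆ + d • ⁅a', y⁆ - c • ⁅b', y⁆ := by
    rw [← lie_skew b' y]
    simp only [add_lie, lie_add, smul_lie, lie_smul, lie_self, smul_zero, add_zero, smul_neg]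
    abel
  rw [hlie]
  exact sub_mem (add_mem (hs a' ha' b' hb') (T.smul_mem _ (hy a' ha'))) (T.smul_mem _ (hy b' hb'))

/-- The subalgebra spanned by a subalgebra `s` and one further element `y`. -/
def adjoinElement (s : LieSubalgebra K L) (y : L)
    (hy : ∀ x ∈ s, ⁅x, y⁆ ∈ s.toSubmodule ⊔ Submodule.span K {y}) : LieSubalgebra K L where
  toSubmodule := s.toSubmodule ⊔ Submodule.span K {y}
  lie_mem' := lie_mem_of_mem_sup_span_singleton
    (fun _ ha _ hb => Submodule.mem_sup_left (s.lie_mem ha hb)) hy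

theorem mem_adjoinElement_self (s : LieSubalgebra K L) (y : L) (hy) : y ∈ adjoinElement s y hy :=
  Submodule.mem_sup_right (Submodule.mem_span_singleton_self y)

theorem le_adjoinElement (s : LieSubalgebra K L) (y : L) (hy) : s ≤ adjoinElement s y hy :=
  fun _ hx => Submodule.mem_sup_left hx

theorem exists_isSolvable_of_normalizes (s : LieSubalgebra K L) [IsSolvable s] {y : L}
    (hy : ∀ x ∈ s, ⁅x, y⁆ ∈ s) : ∃ t : LieSubalgebra K L, IsSolvable t ∧ s ≤ t ∧ y ∈ t :=
  ⟨adjoinElement s y fun x hx => Submodule.mem_sup_left (hy x hx),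
    isSolvable_of_lie_mem s _ fun _ ha _ hb =>
      lie_mem_of_mem_sup_span_singleton (fun _ ha _ hb => s.lie_mem ha hb) hy ha hb,
    le_adjoinElement _ _ _, mem_adjoinElement_self _ _ _⟩

end Solvable

section CartanCriterion

open LieAlgebra LieModule

variable {K L : Type*} [Field K] [LieRing L] [LieAlgebra K L] [FiniteDimensional K L]

theorem isNilpotent_of_isNilpotent_of_injective {A M : Type*} [LieRing A] [LieAlgebra K A]
    [AddCommGroup M] [Module K M] [LieRingModule A M] [LieModule K A M]
    [LieModule.IsNilpotent A M] (f : A →ₗ⁅K,A⁆ M) (hf : Function.Injective f) :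
    LieRing.IsNilpotent A :=
  Function.Injective.lieModuleIsNilpotent (R := K) (f := LieHom.id) (g := f.toLinearMap)
    (fun x m => (f.map_lie x m).symm) hf

/-- Cartan's criterion, for the Killing form of an ambient Lie algebra. -/
theorem isSolvable_of_killingForm_lie_eq_zero [CharZero K] (s : LieSubalgebra K L)
    (h : ∀ x ∈ s, ∀ y ∈ s, ∀ z ∈ s, killingForm K L x ⁅y, z⁆ = 0) : IsSolvable s := by
  let D := derivedSeries K s 1
  have horth (x : s) : D.toSubmodule ≤
      LinearMap.ker (killingForm K L x ∘ₗ s.toSubmodule.subtype) :=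
    derivedSeries_one_le fun a b => h x x.2 a a.2 b b.2
  have htrace : traceForm K D L = 0 := by
    ext x y
    exact horth x y.2
  have hmodule := isNilpotent_derivedSeries_of_traceForm_eq_zero htrace
  let incl : derivedSeries K D 1 →ₗ⁅K, derivedSeries K D 1⁆ L :=
    { toFun := fun x => ((x : D) : s)
      map_add' := fun _ _ => rfl
      map_smul' := fun _ _ => rfl
      map_lie' := rfl }
  have hnil : LieRing.IsNilpotent (derivedSeries K D 1) :=
    isNilpotent_of_isNilpotent_of_injective incl fun a b hab =>
      Subtype.ext (Subtype.ext (Subtype.ext hab))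
  exact isSolvable_of_isSolvable_derivedSeries_one K
    (isSolvable_of_isSolvable_derivedSeries_one K inferInstance)

variable [IsAlgClosed K] [CharZero K]

theorem killingForm_eq_zero_of_isNilpotent_ad (s : LieSubalgebra K L) [IsSolvable s] {x y : L}
    (hx : x ∈ s) (hy : y ∈ s) (hn : IsNilpotent (ad K L x)) : killingForm K L x y = 0 :=
  (LinearMap.isNilpotent_trace_of_isNilpotent
    (isNilpotent_toEnd_mul_of_isSolvable (M := L) (x := (⟨x, hx⟩ : s)) (y := ⟨y, hy⟩) hn)).eq_zero

theorem killingForm_eq_zero_of_normalizes (s : LieSubalgebra K L) [IsSolvable s] {x y : L}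
    (hx : x ∈ s) (hy : ∀ z ∈ s, ⁅z, y⁆ ∈ s) (hn : IsNilpotent (ad K L x)) :
    killingForm K L x y = 0 := by
  obtain ⟨t, ht, hst, hyt⟩ := exists_isSolvable_of_normalizes s hy
  exact killingForm_eq_zero_of_isNilpotent_ad t (hst hx) hyt hn

theorem isNilpotent_ad_lie (s : LieSubalgebra K L) [IsSolvable s] {x y : L} (hx : x ∈ s)
    (hy : y ∈ s) : IsNilpotent (ad K L ⁅x, y⁆) :=
  isNilpotent_toEnd_lie_of_isSolvable (M := L) (x := (⟨x, hx⟩ : s)) (y := ⟨y, hy⟩)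

end CartanCriterion

section SemisimplePart

open Polynomial

variable {K V : Type*} [Field K] [AddCommGroup V] [Module K V]

theorem exists_X_sub_C_pow_dvd_sub_C {S : Set K} (hS : S.Finite) (φ : K → K) (N : ℕ) :
    ∃ R : K[X], ∀ μ ∈ S, (X - C μ) ^ N ∣ R - C (φ μ) := by
  have := hS.to_subtype
  obtain ⟨R, hR⟩ := Ideal.exists_forall_sub_mem_ideal
    (I := fun μ : S => Ideal.span {(X - C (μ : K)) ^ N})
    (fun μ ν hne => by
      rw [Function.onFun, Ideal.isCoprime_span_singleton_iff]
      exact (isCoprime_X_sub_C_of_isUnit_sub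
        (sub_ne_zero_of_ne (Subtype.coe_ne_coe.mpr hne)).isUnit).pow)
    (fun μ => C (φ μ))
  exact ⟨R, fun μ hμ => Ideal.mem_span_singleton.mp (hR ⟨μ, hμ⟩)⟩

theorem aeval_apply_mem_of_apply_mem {f : End K V} {R : K[X]} (hR : R.coeff 0 = 0)
    {U W : Submodule K V} (hUW : U ≤ W) (h : ∀ w ∈ W, f w ∈ U) {w : V} (hw : w ∈ W) :
    aeval f R w ∈ U := by
  obtain ⟨Q, rfl⟩ := X_dvd_iff.mpr hR
  rw [map_mul, aeval_X, End.mul_apply]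
  exact h _ (Q.aeval_apply_smul_mem_of_le_comap hw _ fun z hz => hUW (h z hz))

variable [FiniteDimensional K V]

theorem finite_maxGenEigenspace_ne_bot (f : End K V) : {μ | f.maxGenEigenspace μ ≠ ⊥}.Finite :=
  WellFoundedGT.finite_ne_bot_of_iSupIndep f.independent_maxGenEigenspace

theorem exists_aeval_apply_eq_smul (f : End K V) (φ : K → K) :
    ∃ R : K[X], ∀ μ, ∀ v ∈ f.maxGenEigenspace μ, aeval f R v = φ μ • v := by
  obtain ⟨R, hR⟩ := exists_X_sub_C_pow_dvd_sub_C (finite_maxGenEigenspace_ne_bot f) φ (finrank K V)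
  refine ⟨R, fun μ v hv => ?_⟩
  rcases eq_or_ne v 0 with rfl | hv0
  · rw [map_zero, smul_zero]
  obtain ⟨Q, hQ⟩ := hR μ fun hbot => hv0 (by rwa [hbot, Submodule.mem_bot] at hv)
  have hker : ((f - algebraMap K (End K V) μ) ^ finrank K V) v = 0 := by
    rwa [f.maxGenEigenspace_eq_genEigenspace_finrank, End.mem_genEigenspace_nat,
      LinearMap.mem_ker, ← Algebra.algebraMap_eq_smul_one] at hv
  rw [sub_eq_iff_eq_add, mul_comm] at hQ
  rw [hQ, map_add, map_mul, map_pow, map_sub, aeval_X, aeval_C, aeval_C, LinearMap.add_apply,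
    End.mul_apply, hker, map_zero, zero_add, algebraMap_end_apply]

variable [IsAlgClosed K]

theorem trace_mul_eq_sum_of_apply_eq_smul {f D : End K V} {φ : K → K}
    (hD : ∀ μ, ∀ v ∈ f.maxGenEigenspace μ, D v = φ μ • v) :
    LinearMap.trace K V (f * D) = ∑ μ ∈ (finite_maxGenEigenspace_ne_bot f).toFinset,
      finrank K (f.maxGenEigenspace μ) * (φ μ * μ) := by
  classical
  have hf (μ : K) := f.mapsTo_maxGenEigenspace_of_comm (Commute.refl f) μ
  have hfD (μ : K) : Set.MapsTo (f * D) (f.maxGenEigenspace μ) (f.maxGenEigenspace μ) :=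
    fun v hv => by
      rw [End.mul_apply, hD μ v hv, map_smul]
      exact Submodule.smul_mem _ _ (hf μ hv)
  have hrestrict (μ : K) : (f * D).restrict (hfD μ) = φ μ • f.restrict (hf μ) := by
    refine LinearMap.ext fun v => Subtype.ext ?_
    change f (D v) = φ μ • f v
    rw [hD μ v v.2, map_smul]
  have htrace (μ : K) : LinearMap.trace K _ (f.restrict (hf μ)) =
      finrank K (f.maxGenEigenspace μ) * μ := by
    have hnil : IsNilpotent (f.restrict (hf μ) - algebraMap K _ μ) :=
      f.isNilpotent_restrict_maxGenEigenspace_sub_algebraMap μ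
    have h := LinearMap.trace_comp_eq_mul_of_commute_of_isNilpotent μ (Commute.one_left _) hnil
    rwa [← End.mul_eq_comp, one_mul, LinearMap.trace_one, mul_comm] at h
  have hinternal := DirectSum.isInternal_submodule_of_iSupIndep_of_iSup_eq_top
    f.independent_maxGenEigenspace f.iSup_maxGenEigenspace_eq_top
  rw [LinearMap.trace_eq_sum_trace_restrict' hinternal (finite_maxGenEigenspace_ne_bot f) hfD]
  refine Finset.sum_congr rfl fun μ _ => ?_
  rw [hrestrict, map_smul, htrace, smul_eq_mul, mul_left_comm]

theorem isNilpotent_of_maxGenEigenspace_eq_bot {f : End K V}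
    (h : ∀ μ, μ ≠ 0 → f.maxGenEigenspace μ = ⊥) : IsNilpotent f := by
  have htop : f.maxGenEigenspace 0 = ⊤ := by
    rw [← f.iSup_maxGenEigenspace_eq_top]
    refine le_antisymm (le_iSup _ 0) (iSup_le fun μ => ?_)
    by_cases hμ : μ = 0
    · rw [hμ]
    · rw [h μ hμ]
      exact bot_le
  refine ⟨finrank K V, LinearMap.ext fun v => ?_⟩
  have hv : v ∈ f.maxGenEigenspace 0 := htop ▸ Submodule.mem_top
  simpa [f.maxGenEigenspace_eq_genEigenspace_finrank, End.mem_genEigenspace_nat] using hv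

theorem isNilpotent_of_trace_mul_conj_eq_zero {V : Type*} [AddCommGroup V] [Module ℂ V]
    [FiniteDimensional ℂ V] {f D : End ℂ V}
    (hD : ∀ μ, ∀ v ∈ f.maxGenEigenspace μ, D v = starRingEnd ℂ μ • v)
    (h : LinearMap.trace ℂ V (f * D) = 0) : IsNilpotent f := by
  refine isNilpotent_of_maxGenEigenspace_eq_bot fun μ hμ => ?_
  by_contra hne
  rw [trace_mul_eq_sum_of_apply_eq_smul hD] at h
  simp only [← Complex.normSq_eq_conj_mul_self] at h
  have hnonneg (ν : ℂ) : 0 ≤ finrank ℂ (f.maxGenEigenspace ν) * Complex.normSq ν :=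
    mul_nonneg (Nat.cast_nonneg _) (Complex.normSq_nonneg ν)
  have hsum := (Finset.sum_eq_zero_iff_of_nonneg fun ν _ => hnonneg ν).mp (by exact_mod_cast h) μ
    ((Set.Finite.mem_toFinset _).mpr hne)
  rcases mul_eq_zero.mp hsum with hdim | hnorm
  · exact hne (Submodule.finrank_eq_zero.mp (by exact_mod_cast hdim))
  · exact hμ (Complex.normSq_eq_zero.mp hnorm)

end SemisimplePart

section SemisimplePartOfAd

open LieAlgebra LieModule

variable {K L : Type*} [Field K] [IsAlgClosed K] [LieRing L] [LieAlgebra K L]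
  [FiniteDimensional K L]

theorem lie_apply_of_apply_eq_smul {x : L} {D : End K L} {φ : K →+ K}
    (hD : ∀ μ, ∀ v ∈ (ad K L x).maxGenEigenspace μ, D v = φ μ • v) (a b : L) :
    D ⁅a, b⁆ = ⁅a, D b⁆ - ⁅b, D a⁆ := by
  have hmem (c : L) : c ∈ ⨆ μ, (ad K L x).maxGenEigenspace μ :=
    (ad K L x).iSup_maxGenEigenspace_eq_top ▸ Submodule.mem_top
  induction hmem a using Submodule.iSup_induction' with
  | mem μ a ha =>
    induction hmem b using Submodule.iSup_induction' with
    | mem ν b hb =>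
      have hab := lie_mem_maxGenEigenspace_toEnd (R := K) (L := L) (M := L) ha hb
      rw [hD _ _ hab, hD _ _ ha, hD _ _ hb, lie_smul, lie_smul, ← lie_skew b a]
      simp only [map_add, add_smul, smul_neg]
      abel
    | zero => simp
    | add b c _ _ hb hc => rw [lie_add, map_add, map_add, lie_add, add_lie, hb, hc]; abel
  | zero => simp
  | add b c _ _ hb hc => rw [add_lie, map_add, map_add, lie_add, add_lie, hb, hc]; abel

/-- The element `y` is the complex conjugate of the semisimple part of `x`; the trace of
`ad x ∘ ad y` is the sum of the `|μ|²` over the eigenvalues `μ` of `ad x`. -/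
theorem exists_conj_semisimplePart {L : Type*} [LieRing L] [LieAlgebra ℂ L]
    [FiniteDimensional ℂ L] [IsKilling ℂ L] (x : L) : ∃ y : L,
    (∀ U W : Submodule ℂ L, U ≤ W → (∀ w ∈ W, ⁅x, w⁆ ∈ U) → ∀ w ∈ W, ⁅y, w⁆ ∈ U) ∧
    (∀ (μ : ℂ) (v : L), ⁅x, v⁆ = μ • v → ⁅y, v⁆ = starRingEnd ℂ μ • v) ∧
    (killingForm ℂ L x y = 0 → IsNilpotent (ad ℂ L x)) := by
  obtain rfl | hx0 := eq_or_ne x 0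
  · refine ⟨0, fun U W _ _ w _ => by simp, fun μ v hv => ?_, fun _ => by simp⟩
    have hμv := smul_eq_zero.mp (hv.symm.trans (zero_lie v))
    rcases hμv with rfl | rfl <;> simp
  obtain ⟨R, hR⟩ := exists_aeval_apply_eq_smul (ad ℂ L x) (starRingEnd ℂ)
  obtain ⟨y, hy⟩ := LieDerivation.IsKilling.exists_eq_ad
    (⟨Polynomial.aeval (ad ℂ L x) R,
      lie_apply_of_apply_eq_smul (φ := (starRingEnd ℂ : ℂ →+ ℂ)) hR⟩ : LieDerivation ℂ L L)
  have hyR : ad ℂ L y = Polynomial.aeval (ad ℂ L x) R :=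
    LinearMap.ext fun w => by simpa using LieDerivation.congr_fun hy w
  have hR0 : R.coeff 0 = 0 := by
    have hx : Polynomial.aeval (ad ℂ L x) R x = 0 := by
      simpa using hR 0 x ((End.mem_maxGenEigenspace ..).mpr ⟨1, by simp⟩)
    rw [End.aeval_apply_of_mem_apply_eq_smul (μ := 0) (by simp)] at hx
    rw [Polynomial.coeff_zero_eq_eval_zero]
    exact (smul_eq_zero.mp hx).resolve_right hx0
  refine ⟨y, fun U W hUW hW w hw => ?_, fun μ v hv => ?_, fun h => ?_⟩
  · rw [← ad_apply ℂ, hyR]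
    exact aeval_apply_mem_of_apply_mem hR0 hUW hW hw
  · rw [← ad_apply ℂ, hyR]
    exact hR μ v ((End.mem_maxGenEigenspace ..).mpr ⟨1, by simp [hv]⟩)
  · exact isNilpotent_of_trace_mul_conj_eq_zero (D := ad ℂ L y)
      (fun μ v hv => by rw [hyR, hR μ v hv]) h

end SemisimplePartOfAd

section KillingOrthogonal

open LieAlgebra LieModule

variable {K L : Type*} [Field K] [LieRing L] [LieAlgebra K L]

theorem lie_mem_comm {V : Submodule K L} {x y : L} : ⁅x, y⁆ ∈ V ↔ ⁅y, x⁆ ∈ V := by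
  rw [← lie_skew, neg_mem_iff]

theorem killingForm_comm (x y : L) : killingForm K L x y = killingForm K L y x :=
  traceForm_comm K L L x y

theorem killingForm_lie_apply (x y z : L) : killingForm K L ⁅x, y⁆ z = killingForm K L x ⁅y, z⁆ :=
  traceForm_apply_lie_apply K L L x y z

/-- The orthogonal complement of a subspace for the Killing form. -/
noncomputable def perp (V : Submodule K L) : Submodule K L :=
  LinearMap.BilinForm.orthogonal (killingForm K L) V

theorem mem_perp {V : Submodule K L} {x : L} : x ∈ perp V ↔ ∀ v ∈ V, killingForm K L x v = 0 :=
  LinearMap.BilinForm.mem_orthogonal_iff.trans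
    (forall₂_congr fun v _ => by rw [killingForm_comm])

theorem perp_anti {V W : Submodule K L} (h : V ≤ W) : perp W ≤ perp V :=
  LinearMap.BilinForm.orthogonal_le h

theorem perp_bot : perp (⊥ : Submodule K L) = ⊤ :=
  eq_top_iff.mpr fun x _ => mem_perp.mpr fun v hv => by
    rw [(Submodule.mem_bot K).mp hv, map_zero]

theorem perp_perp [FiniteDimensional K L] [IsKilling K L] (V : Submodule K L) :
    perp (perp V) = V :=
  LinearMap.BilinForm.orthogonal_orthogonal (IsKilling.killingForm_nondegenerate K L)
    (traceForm_isSymm K L L).isRefl V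

theorem lie_mem_perp {V W : Submodule K L} {x y : L} (hx : ∀ v ∈ V, ⁅x, v⁆ ∈ W)
    (hy : y ∈ perp W) : ⁅x, y⁆ ∈ perp V := by
  refine lie_mem_comm.mp (mem_perp.mpr fun v hv => ?_)
  rw [killingForm_lie_apply, mem_perp.mp hy _ (hx v hv)]

theorem lie_mem_perp_toSubmodule {p : LieSubalgebra K L} {x y : L} (hx : x ∈ p)
    (hy : y ∈ perp p.toSubmodule) : ⁅x, y⁆ ∈ perp p.toSubmodule :=
  lie_mem_perp (fun _ hv => p.lie_mem hx hv) hy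

end KillingOrthogonal

section Borel

open LieAlgebra LieModule

variable {K L : Type*} [Field K] [LieRing L] [LieAlgebra K L]

/-- A Borel subalgebra: a maximal solvable subalgebra. -/
def IsBorel (b : LieSubalgebra K L) : Prop :=
  IsSolvable b ∧ ∀ b' : LieSubalgebra K L, IsSolvable b' → b ≤ b' → b' ≤ b

theorem IsBorel.mem_of_normalizes {b : LieSubalgebra K L} (hb : IsBorel b) {y : L}
    (hy : ∀ x ∈ b, ⁅x, y⁆ ∈ b) : y ∈ b := by
  have := hb.1
  obtain ⟨t, ht, hbt, hyt⟩ := exists_isSolvable_of_normalizes b hy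
  exact hb.2 t ht hbt hyt

variable [IsAlgClosed K] [CharZero K] [FiniteDimensional K L]

/-- Lie's theorem for the `b`-module `(M + b) / b`. -/
theorem exists_lie_sub_smul_mem (b : LieSubalgebra K L) [IsSolvable b] {M : Submodule K L}
    (hM : ∀ z ∈ b, ∀ m ∈ M, ⁅z, m⁆ ∈ M) (hMb : ¬M ≤ b.toSubmodule) :
    ∃ x ∈ M, x ∉ b ∧ ∃ χ : b → K, ∀ z : b, ⁅(z : L), x⁆ - χ z • x ∈ b := by
  let N : LieSubmodule K b L := { M with lie_mem := fun {z m} hm => hM z z.2 m hm }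
  let π := LieSubmodule.Quotient.mk' b.toLieSubmodule
  have hπ (x : L) : π x = 0 ↔ x ∈ b := LieSubmodule.Quotient.mk_eq_zero _
  have : Nontrivial (N.map π) := by
    obtain ⟨y, hyM, hyb⟩ := Set.not_subset.mp hMb
    exact ⟨⟨π y, LieSubmodule.mem_map_of_mem (N := N) hyM⟩, 0,
      fun h => hyb ((hπ y).mp (congrArg Subtype.val h))⟩
  obtain ⟨χ, hχ⟩ := exists_nontrivial_weightSpace_of_isSolvable K b (N.map π)
  obtain ⟨⟨⟨q, hq⟩, hqw⟩, hq0⟩ := exists_ne (0 : weightSpace (N.map π) χ)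
  rw [mem_weightSpace] at hqw
  obtain ⟨x, hx, rfl⟩ := (LieSubmodule.mem_map _).mp hq
  refine ⟨x, hx, fun hxb => hq0 (Subtype.ext (Subtype.ext ((hπ x).mpr hxb))), χ, fun z => ?_⟩
  rw [← hπ, map_sub, map_smul, sub_eq_zero]
  exact congrArg Subtype.val (hqw z)

theorem isSolvable_adjoinElement_of_mem_perp (b : LieSubalgebra K L) [IsSolvable b] {x : L}
    (hx : x ∈ perp b.toSubmodule)
    (hxb : ∀ z ∈ b, ⁅z, x⁆ ∈ b.toSubmodule ⊔ Submodule.span K {x}) :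
    IsSolvable (adjoinElement b x hxb) := by
  have hperp {v : L} (hv : v ∈ perp b.toSubmodule) (hvx : killingForm K L v x = 0) :
      v ∈ perp (adjoinElement b x hxb).toSubmodule := by
    refine mem_perp.mpr fun u hu => ?_
    obtain ⟨u', hu', _, hu₂, rfl⟩ := Submodule.mem_sup.mp hu
    obtain ⟨c, rfl⟩ := Submodule.mem_span_singleton.mp hu₂
    rw [map_add, map_smul, hvx, mem_perp.mp hv u' hu', smul_zero, add_zero]
  refine isSolvable_of_killingForm_lie_eq_zero _ fun u hu v hv w hw => ?_
  rw [killingForm_comm]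
  refine mem_perp.mp (lie_mem_of_mem_sup_span_singleton (fun v hv w hw => ?_) (fun v hv => ?_)
    hv hw) u hu
  · refine hperp (mem_perp.mpr fun u hu => ?_) ?_
    · exact killingForm_eq_zero_of_isNilpotent_ad b (b.lie_mem hv hw) hu
        (isNilpotent_ad_lie b hv hw)
    · rw [killingForm_comm]
      exact mem_perp.mp hx _ (b.lie_mem hv hw)
  · refine hperp (lie_mem_perp_toSubmodule hv hx) ?_
    rw [killingForm_lie_apply, lie_self, map_zero]

theorem IsBorel.perp_le {b : LieSubalgebra K L} (hb : IsBorel b) :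
    perp b.toSubmodule ≤ b.toSubmodule := by
  have := hb.1
  by_contra hcon
  obtain ⟨x, hx, hxb, χ, hχ⟩ :=
    exists_lie_sub_smul_mem b (fun z hz m hm => lie_mem_perp_toSubmodule hz hm) hcon
  have hstable : ∀ z ∈ b, ⁅z, x⁆ ∈ b.toSubmodule ⊔ Submodule.span K {x} := fun z hz => by
    rw [← sub_add_cancel ⁅z, x⁆ (χ ⟨z, hz⟩ • x)]
    exact Submodule.add_mem_sup (hχ ⟨z, hz⟩) (Submodule.mem_span_singleton.mpr ⟨_, rfl⟩)
  exact hxb (hb.2 _ (isSolvable_adjoinElement_of_mem_perp b hx hstable)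
    (le_adjoinElement _ _ _) (mem_adjoinElement_self _ _ _))

theorem lie_mem_perp_of_isSolvable {J p : LieSubalgebra K L} [IsSolvable J]
    (hJ : ∀ x ∈ p, ∀ y ∈ J, ⁅y, x⁆ ∈ J) {a y : L} (ha : a ∈ J) (hy : y ∈ p) :
    ⁅a, y⁆ ∈ perp p.toSubmodule := by
  obtain ⟨t, _, hJt, hyt⟩ := exists_isSolvable_of_normalizes J (hJ y hy)
  exact mem_perp.mpr fun w hw => killingForm_eq_zero_of_normalizes J (hJ y hy a ha) (hJ w hw)
    (isNilpotent_ad_lie t (hJt ha) hyt)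

end Borel

section Parabolic

open LieAlgebra LieModule

/-- A parabolic subalgebra: a subalgebra containing a Borel subalgebra. -/
def IsParabolic {K L : Type*} [Field K] [LieRing L] [LieAlgebra K L] (p : LieSubalgebra K L) :
    Prop :=
  ∃ b, IsBorel b ∧ b ≤ p

/-- The preimage in `p` of the centre of `p / perp p`; for parabolic `p` it is the radical. -/
noncomputable def centerModPerp {K L : Type*} [Field K] [LieRing L] [LieAlgebra K L]
    (p : LieSubalgebra K L) : LieSubalgebra K L where
  carrier := {x | x ∈ p ∧ ∀ y ∈ p, ⁅x, y⁆ ∈ perp p.toSubmodule}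
  zero_mem' := ⟨p.zero_mem, fun y _ => by simp only [zero_lie, zero_mem]⟩
  add_mem' := fun ⟨ha, ha'⟩ ⟨hc, hc'⟩ =>
    ⟨p.add_mem ha hc, fun y hy => by rw [add_lie]; exact add_mem (ha' y hy) (hc' y hy)⟩
  smul_mem' := fun a _ ⟨hc, hc'⟩ =>
    ⟨p.smul_mem a hc, fun y hy => by rw [smul_lie]; exact Submodule.smul_mem _ _ (hc' y hy)⟩
  lie_mem' := fun ⟨ha, _⟩ ⟨hc, hc'⟩ =>
    ⟨p.lie_mem ha hc, fun _ hy => lie_mem_comm.mp (lie_mem_perp_toSubmodule hy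
      (lie_mem_comm.mp (hc' _ ha)))⟩

theorem killingForm_eq_zero_of_mem_bracketSpan {L : Type*} [LieRing L] [LieAlgebra ℂ L]
    {p : LieSubalgebra ℂ L} {x z : L}
    (hx : x ∈ bracketSpan L p.toSubmodule p.toSubmodule) (hz : z ∈ centerModPerp p) :
    killingForm ℂ L x z = 0 := by
  suffices h : bracketSpan L p.toSubmodule p.toSubmodule ≤ perp (Submodule.span ℂ {z}) from
    mem_perp.mp (h hx) z (Submodule.mem_span_singleton_self z)
  refine Submodule.span_le.mpr ?_
  rintro _ ⟨a, ha, c, hc, rfl⟩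
  refine mem_perp.mpr fun v hv => ?_
  obtain ⟨r, rfl⟩ := Submodule.mem_span_singleton.mp hv
  rw [map_smul, killingForm_lie_apply, killingForm_comm,
    mem_perp.mp (lie_mem_comm.mp (hz.2 c hc)) a ha, smul_zero]

namespace IsParabolic

section

variable {K L : Type*} [Field K] [IsAlgClosed K] [CharZero K] [LieRing L] [LieAlgebra K L]
  [FiniteDimensional K L] {p : LieSubalgebra K L} (hp : IsParabolic p)

include hp

theorem perp_le : perp p.toSubmodule ≤ p.toSubmodule := by
  obtain ⟨b, hb, hbp⟩ := hp
  exact ((perp_anti hbp).trans hb.perp_le).trans hbp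

theorem mem_of_lie_mem_perp {x : L} (hx : ∀ a ∈ p, ⁅x, a⁆ ∈ perp p.toSubmodule) : x ∈ p := by
  obtain ⟨b, hb, hbp⟩ := hp
  exact hbp (hb.mem_of_normalizes fun a ha =>
    lie_mem_comm.mp (hb.perp_le (perp_anti hbp (hx a (hbp ha)))))

theorem isSolvable_centerModPerp : IsSolvable (centerModPerp p) := by
  obtain ⟨b, hb, hbp⟩ := hp
  have := hb.1
  exact isSolvable_of_lie_mem b _ fun a ha c hc => hb.perp_le (perp_anti hbp (ha.2 c hc.1))

theorem lie_mem_centerModPerp {x y : L} (hx : x ∈ centerModPerp p) (hy : y ∈ p) :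
    ⁅x, y⁆ ∈ centerModPerp p :=
  ⟨hp.perp_le (hx.2 y hy), fun _ hw => lie_mem_comm.mp (lie_mem_perp_toSubmodule hw (hx.2 y hy))⟩

end

variable {L : Type*} [LieRing L] [LieAlgebra ℂ L] [FiniteDimensional ℂ L] [IsKilling ℂ L]
  {p : LieSubalgebra ℂ L} (hp : IsParabolic p)

include hp

theorem isNilpotent_ad {x : L} (hx : x ∈ perp p.toSubmodule) : IsNilpotent (ad ℂ L x) := by
  obtain ⟨b, hb, hbp⟩ := hp
  have hxb := perp_anti hbp hx
  obtain ⟨y, hy, -, hnil⟩ := exists_conj_semisimplePart x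
  exact hnil (mem_perp.mp hxb y (hb.mem_of_normalizes fun a ha => lie_mem_comm.mp
    (hy b.toSubmodule _ le_rfl (fun w hw => b.lie_mem (hb.perp_le hxb) hw) a ha)))

theorem perp_le_bracketSpan :
    perp p.toSubmodule ≤ bracketSpan L p.toSubmodule p.toSubmodule := by
  rw [← perp_perp (bracketSpan L _ _)]
  refine perp_anti fun x hx => hp.mem_of_lie_mem_perp fun a ha => mem_perp.mpr fun c hc => ?_
  rw [killingForm_lie_apply]
  exact mem_perp.mp hx _ (Submodule.subset_span ⟨a, ha, c, hc, rfl⟩)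

theorem mem_perp_of_mem_bracketSpan {x : L} (hx : x ∈ centerModPerp p)
    (hxd : x ∈ bracketSpan L p.toSubmodule p.toSubmodule) : x ∈ perp p.toSubmodule := by
  obtain ⟨y, hy, -, hnil⟩ := exists_conj_semisimplePart x
  have hy' := hy (perp p.toSubmodule) p.toSubmodule hp.perp_le hx.2
  have hnx := hnil (killingForm_eq_zero_of_mem_bracketSpan hxd ⟨hp.mem_of_lie_mem_perp hy', hy'⟩)
  have := hp.isSolvable_centerModPerp
  exact mem_perp.mpr fun w hw => killingForm_eq_zero_of_normalizes (centerModPerp p) hx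
    (fun z hz => hp.lie_mem_centerModPerp hz hw) hnx

end IsParabolic

end Parabolic

section CartanSubalgebra

open LieAlgebra LieModule

variable {K L : Type*} [Field K] [LieRing L] [LieAlgebra K L]

/-- `j` is a Cartan subalgebra of the subalgebra `p`: a nilpotent subalgebra equal to its own
normalizer in `p`. -/
structure IsCartanOf (p j : LieSubalgebra K L) : Prop where
  le : j ≤ p
  isNilpotent : LieRing.IsNilpotent j
  mem_of_normalizes : ∀ x ∈ p, (∀ y ∈ j, ⁅x, y⁆ ∈ j) → x ∈ j

theorem eq_zero_of_pow_apply_add_eq_zero {K V : Type*} [Field K]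
    [AddCommGroup V] [Module K V]
    {f : End K V} {U W : Submodule K V} (hU : ∀ u ∈ U, f u ∈ U) (hW : ∀ w ∈ W, f w ∈ W)
    (hUW : U ⊓ W = ⊥) {u w : V} (hu : u ∈ U) (hw : w ∈ W) {k : ℕ} (h : (f ^ k) (u + w) = 0) :
    (f ^ k) u = 0 ∧ (f ^ k) w = 0 := by
  rw [map_add] at h
  have huk := End.pow_apply_mem_of_forall_mem k hU u hu
  have hwk := End.pow_apply_mem_of_forall_mem k hW w hw
  have hu0 : (f ^ k) u = 0 := by
    rw [← Submodule.mem_bot K, ← hUW]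
    exact ⟨huk, eq_neg_of_add_eq_zero_left h ▸ W.neg_mem hwk⟩
  exact ⟨hu0, by rwa [hu0, zero_add] at h⟩

theorem mem_zeroRootSubalgebra_iff (j : LieSubalgebra K L) [LieRing.IsNilpotent j] {x : L} :
    x ∈ zeroRootSubalgebra K L j ↔ ∀ z ∈ j, ∃ k : ℕ, (ad K L z ^ k) x = 0 := by
  rw [mem_zeroRootSubalgebra]
  exact ⟨fun h z hz => h ⟨z, hz⟩, fun h z => h z z.2⟩

theorem mem_zeroRootSubalgebra_of_lie_mem {j : LieSubalgebra K L} [LieRing.IsNilpotent j] {x : L}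
    (h : ∀ z ∈ j, ⁅x, z⁆ ∈ zeroRootSubalgebra K L j) : x ∈ zeroRootSubalgebra K L j := by
  refine (mem_zeroRootSubalgebra_iff j).mpr fun z hz => ?_
  obtain ⟨k, hk⟩ := (mem_zeroRootSubalgebra_iff j).mp (h z hz) z hz
  exact ⟨k + 1, by rw [pow_succ, End.mul_apply, ad_apply, ← lie_skew, map_neg, hk, neg_zero]⟩

theorem ad_pow_apply_sub_smul_mem {j : LieSubalgebra K L} {z x : L} {c : K} (hz : z ∈ j)
    (h : ⁅z, x⁆ - c • x ∈ j) (k : ℕ) : (ad K L z ^ k) x - c ^ k • x ∈ j := by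
  induction k with
  | zero => simp only [pow_zero, End.one_apply, one_smul, sub_self, zero_mem]
  | succ k ih =>
    have hrec : (ad K L z ^ (k + 1)) x - c ^ (k + 1) • x =
        ⁅z, (ad K L z ^ k) x - c ^ k • x⁆ + c ^ k • (⁅z, x⁆ - c • x) := by
      rw [pow_succ', End.mul_apply, ad_apply, lie_sub, lie_smul, smul_sub, smul_smul, pow_succ]
      abel
    rw [hrec]
    exact j.add_mem (j.lie_mem hz ih) (j.smul_mem _ h)

theorem lie_mem_of_ad_pow_apply_eq_zero {j : LieSubalgebra K L} {z x : L} {c : K} {k : ℕ}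
    (hz : z ∈ j) (hx : x ∉ j) (h : ⁅z, x⁆ - c • x ∈ j) (hk : (ad K L z ^ k) x = 0) :
    ⁅z, x⁆ ∈ j := by
  have hkx := ad_pow_apply_sub_smul_mem hz h k
  rw [hk, zero_sub, neg_mem_iff] at hkx
  have hc : c = 0 := by
    by_contra hc
    exact hx ((j.toSubmodule.smul_mem_iff (pow_ne_zero k hc)).mp hkx)
  rwa [hc, zero_smul, sub_zero] at h

theorem exists_add_mem_posFittingComp [FiniteDimensional K L] (j : LieSubalgebra K L)
    [LieRing.IsNilpotent j] {V : Submodule K L} (hV : ∀ z ∈ j, ∀ v ∈ V, ⁅z, v⁆ ∈ V)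
    {v : L} (hv : v ∈ V) :
    ∃ v₀ ∈ V, v₀ ∈ zeroRootSubalgebra K L j ∧ ∃ v₁ ∈ posFittingComp K j L, v = v₀ + v₁ := by
  let N : LieSubmodule K j L := { V with lie_mem := fun {z m} hm => hV z z.2 m hm }
  have htop := (isCompl_genWeightSpace_zero_posFittingComp K j N).codisjoint.eq_top
  obtain ⟨v₀, h₀, v₁, h₁, hsum⟩ := (LieSubmodule.mem_sup _ _ _).mp
    (htop ▸ LieSubmodule.mem_top (⟨v, hv⟩ : N))
  have hzero : N.incl v₀ ∈ genWeightSpace L (0 : j → K) :=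
    map_genWeightSpace_le N.incl (LieSubmodule.mem_map_of_mem h₀)
  exact ⟨v₀, v₀.2, hzero, v₁, map_posFittingComp_le N.incl (LieSubmodule.mem_map_of_mem h₁),
    (congrArg Subtype.val hsum).symm⟩

variable [IsAlgClosed K] [CharZero K] [FiniteDimensional K L]

theorem exists_normalizes_of_le_zeroRootSubalgebra (j : LieSubalgebra K L)
    [LieRing.IsNilpotent j] {M : Submodule K L} (hM : ∀ z ∈ j, ∀ m ∈ M, ⁅z, m⁆ ∈ M)
    (hM0 : M ≤ (zeroRootSubalgebra K L j).toSubmodule) (hMj : ¬M ≤ j.toSubmodule) :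
    ∃ x ∈ M, x ∉ j ∧ ∀ z ∈ j, ⁅x, z⁆ ∈ j := by
  obtain ⟨x, hx, hxj, χ, hχ⟩ := exists_lie_sub_smul_mem j hM hMj
  refine ⟨x, hx, hxj, fun z hz => lie_mem_comm.mp ?_⟩
  obtain ⟨k, hk⟩ := (mem_zeroRootSubalgebra_iff j).mp (hM0 hx) z hz
  exact lie_mem_of_ad_pow_apply_eq_zero hz hxj (hχ ⟨z, hz⟩) hk

theorem IsCartanOf.mem_of_mem_zeroRootSubalgebra {p j : LieSubalgebra K L}
    [LieRing.IsNilpotent j] (hj : IsCartanOf p j) {x : L} (hx : x ∈ p)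
    (hx0 : x ∈ zeroRootSubalgebra K L j) : x ∈ j := by
  by_contra hxj
  obtain ⟨y, hy, hyj, hn⟩ := exists_normalizes_of_le_zeroRootSubalgebra j
    (M := p.toSubmodule ⊓ (zeroRootSubalgebra K L j).toSubmodule)
    (fun z hz m hm => ⟨p.lie_mem (hj.le hz) hm.1,
      (zeroRootSubalgebra K L j).lie_mem (le_zeroRootSubalgebra K L j hz) hm.2⟩)
    inf_le_right (fun h => hxj (h ⟨hx, hx0⟩))
  exact hyj (hj.mem_of_normalizes y hy.1 hn)

theorem IsCartanOf.exists_add_mem_perp {p l j : LieSubalgebra K L} [LieRing.IsNilpotent j]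
    (hj : IsCartanOf l j) (hlp : l ≤ p) (hinf : l.toSubmodule ⊓ perp p.toSubmodule = ⊥)
    (hsup : l.toSubmodule ⊔ perp p.toSubmodule = p.toSubmodule) {x : L} (hx : x ∈ p)
    (hx0 : x ∈ zeroRootSubalgebra K L j) :
    ∃ a ∈ j, ∃ c ∈ perp p.toSubmodule, c ∈ zeroRootSubalgebra K L j ∧ x = a + c := by
  rw [← LieSubalgebra.mem_toSubmodule, ← hsup] at hx
  obtain ⟨a, ha, c, hc, rfl⟩ := Submodule.mem_sup.mp hx
  have hpow : ∀ z ∈ j, ∃ k : ℕ, (ad K L z ^ k) a = 0 ∧ (ad K L z ^ k) c = 0 := fun z hz => by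
    obtain ⟨k, hk⟩ := (mem_zeroRootSubalgebra_iff j).mp hx0 z hz
    exact ⟨k, eq_zero_of_pow_apply_add_eq_zero (fun u hu => l.lie_mem (hj.le hz) hu)
      (fun w hw => lie_mem_perp_toSubmodule (hlp (hj.le hz)) hw) hinf ha hc hk⟩
  exact ⟨a, hj.mem_of_mem_zeroRootSubalgebra ha ((mem_zeroRootSubalgebra_iff j).mpr
    fun z hz => (hpow z hz).imp fun _ h => h.1), c, hc,
    (mem_zeroRootSubalgebra_iff j).mpr fun z hz => (hpow z hz).imp fun _ h => h.2, rfl⟩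

theorem isSolvable_of_exists_sub_mem_perp {p q j : LieSubalgebra K L} (hqp : q ≤ p) (hjp : j ≤ p)
    [IsSolvable j] (h : ∀ x ∈ q, ∃ a ∈ j, x - a ∈ perp p.toSubmodule) : IsSolvable q := by
  refine isSolvable_of_killingForm_lie_eq_zero q fun u hu v hv w hw => ?_
  obtain ⟨a, ha, hua⟩ := h u hu
  obtain ⟨b, hb, hvb⟩ := h v hv
  obtain ⟨c, hc, hwc⟩ := h w hw
  have hvw : ⁅v, w⁆ - ⁅b, c⁆ ∈ perp p.toSubmodule := by
    have hsplit : ⁅v, w⁆ - ⁅b, c⁆ = ⁅b, w - c⁆ + ⁅v - b, w⁆ := by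
      simp only [sub_lie, lie_sub]
      abel
    rw [hsplit]
    exact add_mem (lie_mem_perp_toSubmodule (hjp hb) hwc)
      (lie_mem_comm.mp (lie_mem_perp_toSubmodule (hqp hw) hvb))
  calc killingForm K L u ⁅v, w⁆ = killingForm K L u ⁅b, c⁆ := by
        rw [← sub_eq_zero, ← map_sub, killingForm_comm, mem_perp.mp hvw u (hqp hu)]
    _ = killingForm K L a ⁅b, c⁆ := by
        rw [← sub_eq_zero, ← LinearMap.sub_apply, ← map_sub,
          mem_perp.mp hua _ (hjp (j.lie_mem hb hc))]
    _ = 0 := by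
        rw [killingForm_comm]
        exact killingForm_eq_zero_of_isNilpotent_ad j (j.lie_mem hb hc) ha
          (isNilpotent_ad_lie j hb hc)

end CartanSubalgebra

section CartanOfParabolic

open LieAlgebra LieModule

variable {L : Type*} [LieRing L] [LieAlgebra ℂ L] [FiniteDimensional ℂ L] [IsKilling ℂ L]
  {p l j : LieSubalgebra ℂ L}

theorem IsParabolic.mem_of_mem_zeroRootSubalgebra (hp : IsParabolic p) [LieRing.IsNilpotent j]
    (hj : IsCartanOf p j) {y : L} (hy : y ∈ zeroRootSubalgebra ℂ L j)
    (hyj : ∀ z ∈ j, ⁅y, z⁆ ∈ j) : y ∈ p := by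
  rw [← LieSubalgebra.mem_toSubmodule, ← perp_perp p.toSubmodule]
  refine mem_perp.mpr fun v hv => ?_
  obtain ⟨v₀, hv₀, h₀, v₁, h₁, rfl⟩ := exists_add_mem_posFittingComp j
    (fun z hz v hv => lie_mem_perp_toSubmodule (hj.le hz) hv) hv
  have hv₀j : v₀ ∈ j := hj.mem_of_mem_zeroRootSubalgebra (hp.perp_le hv₀) h₀
  rw [map_add, killingForm_eq_zero_of_mem_zeroRoot_mem_posFitting ℂ L j hy h₁, killingForm_comm,
    killingForm_eq_zero_of_normalizes j hv₀j (fun z hz => lie_mem_comm.mp (hyj z hz))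
      (hp.isNilpotent_ad hv₀), add_zero]

theorem IsCartanOf.isCartanSubalgebra (hj : IsCartanOf p j) (hp : IsParabolic p) :
    j.IsCartanSubalgebra := by
  have := hj.isNilpotent
  rw [← zeroRootSubalgebra_eq_iff_is_cartan]
  refine le_antisymm ?_ (le_zeroRootSubalgebra ℂ L j)
  by_contra hne
  obtain ⟨y, hy, hyj, hn⟩ := exists_normalizes_of_le_zeroRootSubalgebra j
    (fun z hz m hm => (zeroRootSubalgebra ℂ L j).lie_mem (le_zeroRootSubalgebra ℂ L j hz) hm)
    le_rfl hne
  exact hyj (hj.mem_of_mem_zeroRootSubalgebra (hp.mem_of_mem_zeroRootSubalgebra hj hy hn) hy)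

theorem isNilpotent_inf_zeroRootSubalgebra (hp : IsParabolic p) [LieRing.IsNilpotent j]
    (hjp : j ≤ p) (h : ∀ x ∈ p, x ∈ zeroRootSubalgebra ℂ L j →
      ∃ a ∈ j, ∃ c ∈ perp p.toSubmodule, c ∈ zeroRootSubalgebra ℂ L j ∧ x = a + c) :
    LieRing.IsNilpotent (p ⊓ zeroRootSubalgebra ℂ L j : LieSubalgebra ℂ L) := by
  set q : LieSubalgebra ℂ L := p ⊓ zeroRootSubalgebra ℂ L j
  have : IsSolvable q := isSolvable_of_exists_sub_mem_perp (j := j) inf_le_left hjp fun x hx => by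
    obtain ⟨a, ha, c, hc, -, rfl⟩ := h x hx.1 hx.2
    exact ⟨a, ha, by rwa [add_sub_cancel_left]⟩
  rw [LieAlgebra.isNilpotent_iff_forall (R := ℂ)]
  rintro ⟨x, hx⟩
  obtain ⟨a, ha, c, hc, hc0, rfl⟩ := h x hx.1 hx.2
  refine isNilpotent_toEnd_add_of_isSolvable (M := q)
    (x := (⟨a, hjp ha, le_zeroRootSubalgebra ℂ L j ha⟩ : q)) (y := ⟨c, hp.perp_le hc, hc0⟩) ?_ ?_
  · refine End.isNilpotent_iff_of_finite.mpr fun y => ?_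
    obtain ⟨k, hk⟩ := (mem_zeroRootSubalgebra_iff j).mp y.2.2 a ha
    exact ⟨k, Subtype.ext ((LieSubalgebra.coe_ad_pow ℂ L q _ y k).trans hk)⟩
  · obtain ⟨k, hk⟩ := hp.isNilpotent_ad hc
    exact ⟨k, LinearMap.ext fun y =>
      Subtype.ext ((LieSubalgebra.coe_ad_pow ℂ L q _ y k).trans (LinearMap.congr_fun hk _))⟩

theorem IsCartanOf.isCartanSubalgebra_of_levi (hj : IsCartanOf l j) (hp : IsParabolic p)
    (hlp : l ≤ p) (hinf : l.toSubmodule ⊓ perp p.toSubmodule = ⊥)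
    (hsup : l.toSubmodule ⊔ perp p.toSubmodule = p.toSubmodule) : j.IsCartanSubalgebra := by
  have := hj.isNilpotent
  have hjp : j ≤ p := hj.le.trans hlp
  have hdecomp (x : L) := hj.exists_add_mem_perp hlp hinf hsup (x := x)
  set q : LieSubalgebra ℂ L := p ⊓ zeroRootSubalgebra ℂ L j
  have hjq : j ≤ q := le_inf hjp (le_zeroRootSubalgebra ℂ L j)
  have hqp : IsCartanOf p q :=
    ⟨inf_le_left, isNilpotent_inf_zeroRootSubalgebra hp hjp hdecomp, fun x hx hn =>
      ⟨hx, mem_zeroRootSubalgebra_of_lie_mem fun z hz => (hn z (hjq hz)).2⟩⟩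
  have hq := hqp.isCartanSubalgebra hp
  suffices hqj : q ≤ j by rwa [le_antisymm hqj hjq] at hq
  intro x hx
  obtain ⟨a, ha, c, hc, hc0, rfl⟩ := hdecomp x hx.1 hx.2
  have hc_zero : c = 0 := IsKilling.eq_zero_of_isNilpotent_ad_of_mem_isCartanSubalgebra ℂ L q
    ⟨hp.perp_le hc, hc0⟩ (hp.isNilpotent_ad hc)
  rwa [hc_zero, add_zero]

end CartanOfParabolic

section RootSubspace

open LieAlgebra LieModule

/-- The root space of `α` relative to `H` as a subspace of `L`. It is defined for every function
`α` on `H`, hence possibly zero, and is `H` itself for `α = 0`. -/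
noncomputable def rootSubspace {K L : Type*} [Field K] [LieRing L] [LieAlgebra K L]
    (H : LieSubalgebra K L) [LieRing.IsNilpotent H] (α : H → K) : Submodule K L :=
  (rootSpace H α).toSubmodule

variable {K L : Type*} [Field K] [LieRing L] [LieAlgebra K L]
  {H : LieSubalgebra K L}

theorem exists_weight_coe_eq [LieRing.IsNilpotent H] {α : H → K} (h : rootSubspace H α ≠ ⊥) :
    ∃ A : Weight K H L, (A : H → K) = α :=
  ⟨⟨α, fun hbot => h ((LieSubmodule.toSubmodule_eq_bot _).mpr hbot)⟩, rfl⟩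

theorem lie_mem_rootSubspace_add [LieRing.IsNilpotent H] {α β : H → K} {x y : L}
    (hx : x ∈ rootSubspace H α) (hy : y ∈ rootSubspace H β) : ⁅x, y⁆ ∈ rootSubspace H (α + β) :=
  lie_mem_genWeightSpace_of_mem_genWeightSpace hx hy

variable [FiniteDimensional K L] [H.IsCartanSubalgebra]

theorem rootSubspace_zero : rootSubspace H 0 = H.toSubmodule := by
  rw [rootSubspace, rootSpace_zero_eq]
  rfl

variable [IsAlgClosed K]

theorem killingForm_eq_zero_of_mem_rootSubspace {α β : H → K} {x y : L}
    (hx : x ∈ rootSubspace H α) (hy : y ∈ rootSubspace H β) (h : α + β ≠ 0) :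
    killingForm K L x y = 0 :=
  killingForm_apply_eq_zero_of_mem_rootSpace_of_add_ne_zero K L H hx hy h

theorem le_of_forall_mem_rootSubspace {U W : Submodule K L} (hU : ∀ h ∈ H, ∀ u ∈ U, ⁅h, u⁆ ∈ U)
    (h : ∀ α, ∀ x ∈ U, x ∈ rootSubspace H α → x ∈ W) : U ≤ W := by
  let N : LieSubmodule K H L := { U with lie_mem := fun {z m} hm => hU z z.2 m hm }
  have hN : N ≤ ⨆ χ : Weight K H L, N ⊓ genWeightSpace L χ :=
    (eq_iSup_inf_genWeightSpace K H L N).le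
  intro x hx
  exact LieSubmodule.iSup_induction (fun χ : Weight K H L => N ⊓ genWeightSpace L χ)
    (motive := (· ∈ W)) (hN hx) (fun χ y hy => h χ y hy.1 hy.2) W.zero_mem
    fun y z hy hz => W.add_mem hy hz

variable [IsKilling K L]

theorem eq_zero_of_killingForm_rootSubspace_neg {α : H → K} {x : L} (hx : x ∈ rootSubspace H α)
    (h : ∀ y ∈ rootSubspace H (-α), killingForm K L x y = 0) : x = 0 := by
  simpa using mem_ker_killingForm_of_mem_rootSpace_of_forall_rootSpace_neg K L H hx h

theorem rootSubspace_neg_ne_bot {α : H → K} (h : rootSubspace H α ≠ ⊥) :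
    rootSubspace H (-α) ≠ ⊥ := by
  obtain ⟨x, hx, hx0⟩ := Submodule.exists_mem_ne_zero_of_ne_bot h
  refine fun hbot => hx0 (eq_zero_of_killingForm_rootSubspace_neg hx fun y hy => ?_)
  rw [hbot, Submodule.mem_bot] at hy
  rw [hy, map_zero]

variable [CharZero K]

theorem lie_eq_smul_of_mem_rootSubspace {α : H → K} {x : L} (hx : x ∈ rootSubspace H α) (h : H) :
    ⁅(h : L), x⁆ = α h • x :=
  IsKilling.lie_eq_smul_of_mem_rootSpace hx h

theorem exists_smul_eq_of_mem_rootSubspace {α : H → K} (hα : α ≠ 0) {x y : L}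
    (hx : x ∈ rootSubspace H α) (hx0 : x ≠ 0) (hy : y ∈ rootSubspace H α) :
    ∃ c : K, c • x = y := by
  obtain ⟨A, rfl⟩ := exists_weight_coe_eq (Submodule.ne_bot_iff _ |>.mpr ⟨x, hx, hx0⟩)
  obtain ⟨c, hc⟩ := (finrank_eq_one_iff_of_nonzero' (⟨x, hx⟩ : rootSpace H A)
    (fun h => hx0 (congrArg Subtype.val h))).mp (IsKilling.finrank_rootSpace_eq_one A hα) ⟨y, hy⟩
  exact ⟨c, congrArg Subtype.val hc⟩

theorem rootSubspace_le_of_mem {α : H → K} (hα : α ≠ 0) {U : Submodule K L} {x : L}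
    (hx : x ∈ rootSubspace H α) (hx0 : x ≠ 0) (hxU : x ∈ U) : rootSubspace H α ≤ U := by
  intro y hy
  obtain ⟨c, rfl⟩ := exists_smul_eq_of_mem_rootSubspace hα hx hx0 hy
  exact U.smul_mem c hxU

theorem exists_smul_coroot_eq_lie {A : Weight K H L} (hA : A.IsNonZero) {e f : L}
    (he : e ∈ rootSubspace H A) (hf : f ∈ rootSubspace H (-A)) :
    ∃ c : K, c • (IsKilling.coroot A : L) = ⁅e, f⁆ := by
  obtain ⟨h, e₀, f₀, t, he₀, hf₀⟩ := IsKilling.exists_isSl2Triple_of_weight_isNonZero hA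
  have hA0 : (A : H → K) ≠ 0 := hA
  obtain ⟨a, rfl⟩ := exists_smul_eq_of_mem_rootSubspace hA0 he₀ t.e_ne_zero he
  obtain ⟨b, rfl⟩ := exists_smul_eq_of_mem_rootSubspace (neg_ne_zero.mpr hA0) hf₀ t.f_ne_zero hf
  exact ⟨a * b, by rw [smul_lie, lie_smul, t.lie_e_f, t.h_eq_coroot hA he₀ hf₀, smul_smul]⟩

/-- If `⁅e, x⁆ = 0`, then `x` and any vector of weight `-(α + β)` are both primitive for the
`sl₂`-triple of `β`, with weights `m ≥ 0` and `-m - 2 ≥ 0`. -/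
theorem lie_ne_zero_of_mem_rootSubspace {α β : H → K} (hα : α ≠ 0) (hβ : β ≠ 0)
    (hαβ : rootSubspace H (α + β) ≠ ⊥) {x e : L} (hx : x ∈ rootSubspace H α) (hx0 : x ≠ 0)
    (he : e ∈ rootSubspace H β) (he0 : e ≠ 0) : ⁅e, x⁆ ≠ 0 := by
  intro hex
  obtain ⟨B, rfl⟩ := exists_weight_coe_eq (Submodule.ne_bot_iff _ |>.mpr ⟨e, he, he0⟩)
  obtain ⟨h, e₀, f, t, he₀, hf⟩ := IsKilling.exists_isSl2Triple_of_weight_isNonZero hβ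
  have hh := t.h_eq_coroot hβ he₀ hf
  obtain ⟨c, rfl⟩ := exists_smul_eq_of_mem_rootSubspace hβ he he0 he₀
  have hcex : ⁅c • e, x⁆ = 0 := by rw [smul_lie, hex, smul_zero]
  have hxprim : t.HasPrimitiveVectorWith x (α (IsKilling.coroot B)) :=
    ⟨hx0, by rw [hh]; exact lie_eq_smul_of_mem_rootSubspace hx _, hcex⟩
  obtain ⟨y, hy, hy0⟩ := Submodule.exists_mem_ne_zero_of_ne_bot (rootSubspace_neg_ne_bot hαβ)
  have hcey : ⁅c • e, y⁆ = 0 := by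
    have hmem : ⁅c • e, y⁆ ∈ rootSubspace H (-α) := by
      rw [show -α = ↑B + -(α + ↑B) by abel]
      exact lie_mem_rootSubspace_add he₀ hy
    refine eq_zero_of_killingForm_rootSubspace_neg hmem fun z hz => ?_
    rw [neg_neg] at hz
    obtain ⟨d, rfl⟩ := exists_smul_eq_of_mem_rootSubspace hα hx hx0 hz
    rw [← lie_skew, map_neg, LinearMap.neg_apply, killingForm_lie_apply, lie_smul, hcex, smul_zero,
      map_zero, neg_zero]
  have hyprim : t.HasPrimitiveVectorWith y ((-(α + ↑B)) (IsKilling.coroot B)) :=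
    ⟨hy0, by rw [hh]; exact lie_eq_smul_of_mem_rootSubspace hy _, hcey⟩
  obtain ⟨m, hm⟩ := hxprim.exists_nat
  obtain ⟨n, hn⟩ := hyprim.exists_nat
  rw [Pi.neg_apply, Pi.add_apply, hm, IsKilling.root_apply_coroot hβ] at hn
  have hsum : ((n + m + 2 : ℕ) : K) = 0 := by
    push_cast
    rw [← hn]
    ring
  norm_cast at hsum

theorem rootSubspace_le_of_lie_mem {β : H → K} (hβ : β ≠ 0) {U : Submodule K L}
    (hHU : H.toSubmodule ≤ U) (hU : ∀ e ∈ rootSubspace H β, ∀ u ∈ U, ⁅e, u⁆ ∈ U) :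
    rootSubspace H β ≤ U := by
  obtain ⟨h, hh⟩ := Function.ne_iff.mp hβ
  intro e he
  have hhe := lie_mem_comm.mp (hU e he h (hHU h.2))
  rwa [lie_eq_smul_of_mem_rootSubspace he, U.smul_mem_iff hh] at hhe

theorem rootSubspace_add_le {α β : H → K} {U : Submodule K L} (hα : rootSubspace H α ≤ U)
    (hα0 : rootSubspace H α ≠ ⊥) (hβ0 : rootSubspace H β ≠ ⊥) (h : α + β ≠ 0)
    (hU : ∀ e ∈ rootSubspace H β, ∀ u ∈ U, ⁅e, u⁆ ∈ U) : rootSubspace H (α + β) ≤ U := by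
  obtain rfl | hβ := eq_or_ne β 0
  · rwa [add_zero]
  obtain rfl | hα' := eq_or_ne α 0
  · rw [zero_add]
    exact rootSubspace_le_of_lie_mem hβ (rootSubspace_zero (H := H) ▸ hα) hU
  obtain hbot | hne := eq_or_ne (rootSubspace H (α + β)) ⊥
  · exact hbot ▸ bot_le
  obtain ⟨x, hx, hx0⟩ := Submodule.exists_mem_ne_zero_of_ne_bot hα0
  obtain ⟨e, he, he0⟩ := Submodule.exists_mem_ne_zero_of_ne_bot hβ0
  have hmem : ⁅e, x⁆ ∈ rootSubspace H (α + β) := add_comm β α ▸ lie_mem_rootSubspace_add he hx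
  exact rootSubspace_le_of_mem h hmem (lie_ne_zero_of_mem_rootSubspace hα' hβ hne hx hx0 he he0)
    (hU e he x (hα hx))

end RootSubspace

section LeviSubspace

open LieAlgebra LieModule

/-- The Levi factor of `p` containing `H`: the sum of the root spaces `α` such that `p` contains
the root spaces of both `α` and `-α`. -/
noncomputable def leviSubspace {K L : Type*} [Field K] [LieRing L] [LieAlgebra K L]
    (H : LieSubalgebra K L) [LieRing.IsNilpotent H] (p : LieSubalgebra K L) : Submodule K L :=
  ⨆ (α : H → K) (_ : rootSubspace H α ≤ p.toSubmodule ∧ rootSubspace H (-α) ≤ p.toSubmodule),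
    rootSubspace H α

variable {K L : Type*} [Field K] [LieRing L] [LieAlgebra K L] {H p : LieSubalgebra K L}

theorem rootSubspace_le_leviSubspace [LieRing.IsNilpotent H] {α : H → K}
    (hα : rootSubspace H α ≤ p.toSubmodule) (hnα : rootSubspace H (-α) ≤ p.toSubmodule) :
    rootSubspace H α ≤ leviSubspace H p :=
  le_iSup₂_of_le α ⟨hα, hnα⟩ le_rfl

theorem leviSubspace_le [LieRing.IsNilpotent H] : leviSubspace H p ≤ p.toSubmodule :=
  iSup₂_le fun _ h => h.1

theorem leviSubspace_induction [LieRing.IsNilpotent H] {P : L → Prop} (zero : P 0)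
    (add : ∀ x y, P x → P y → P (x + y))
    (mem : ∀ α : H → K, rootSubspace H α ≤ p.toSubmodule → rootSubspace H (-α) ≤ p.toSubmodule →
      ∀ x ∈ rootSubspace H α, P x) {x : L} (hx : x ∈ leviSubspace H p) : P x := by
  rw [leviSubspace, iSup_subtype'] at hx
  exact Submodule.iSup_induction _ (motive := P) hx (fun α => mem α α.2.1 α.2.2) zero add

variable [FiniteDimensional K L] [H.IsCartanSubalgebra]

theorem le_leviSubspace (hH : H ≤ p) : H.toSubmodule ≤ leviSubspace H p := by
  rw [← rootSubspace_zero]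
  refine rootSubspace_le_leviSubspace ?_ ?_
  · rwa [rootSubspace_zero]
  · rwa [neg_zero, rootSubspace_zero]

variable [IsAlgClosed K]

theorem mem_perp_of_forall_mem_rootSubspace (hH : H ≤ p) {α : H → K} {x : L}
    (hx : x ∈ rootSubspace H α)
    (h : ∀ v ∈ p, v ∈ rootSubspace H (-α) → killingForm K L x v = 0) :
    x ∈ perp p.toSubmodule := by
  suffices hle : p.toSubmodule ≤ LinearMap.ker (killingForm K L x) from mem_perp.mpr hle
  refine le_of_forall_mem_rootSubspace (fun h hh u hu => p.lie_mem (hH hh) hu)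
    fun β v hv hvβ => ?_
  obtain hαβ | hαβ := eq_or_ne (α + β) 0
  · exact h v hv (neg_eq_of_add_eq_zero_right hαβ ▸ hvβ)
  · exact killingForm_eq_zero_of_mem_rootSubspace hx hvβ hαβ

variable [CharZero K] [IsKilling K L]

theorem rootSubspace_add_le_toSubmodule (hH : H ≤ p) {α β : H → K}
    (hα : rootSubspace H α ≤ p.toSubmodule) (hβ : rootSubspace H β ≤ p.toSubmodule)
    (hα0 : rootSubspace H α ≠ ⊥) (hβ0 : rootSubspace H β ≠ ⊥) :
    rootSubspace H (α + β) ≤ p.toSubmodule := by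
  obtain h | h := eq_or_ne (α + β) 0
  · rwa [h, rootSubspace_zero]
  · exact rootSubspace_add_le hα hα0 hβ0 h fun e he u hu => p.lie_mem (hβ he) hu

theorem lie_mem_leviSubspace (hH : H ≤ p) {x y : L} (hx : x ∈ leviSubspace H p)
    (hy : y ∈ leviSubspace H p) : ⁅x, y⁆ ∈ leviSubspace H p := by
  refine leviSubspace_induction (P := fun x => ⁅x, y⁆ ∈ leviSubspace H p) (by simp)
    (fun a b ha hb => by rw [add_lie]; exact add_mem ha hb) (fun α hα hnα x hx => ?_) hx
  refine leviSubspace_induction (P := fun y => ⁅x, y⁆ ∈ leviSubspace H p) (by simp)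
    (fun a b ha hb => by rw [lie_add]; exact add_mem ha hb) (fun β hβ hnβ y hy => ?_) hy
  obtain rfl | hx0 := eq_or_ne x 0
  · rw [zero_lie]
    exact zero_mem _
  obtain rfl | hy0 := eq_or_ne y 0
  · rw [lie_zero]
    exact zero_mem _
  have hα0 := (Submodule.ne_bot_iff _).mpr ⟨x, hx, hx0⟩
  have hβ0 := (Submodule.ne_bot_iff _).mpr ⟨y, hy, hy0⟩
  refine rootSubspace_le_leviSubspace (rootSubspace_add_le_toSubmodule hH hα hβ hα0 hβ0) ?_
    (lie_mem_rootSubspace_add hx hy)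
  rw [neg_add]
  exact rootSubspace_add_le_toSubmodule hH hnα hnβ (rootSubspace_neg_ne_bot hα0)
    (rootSubspace_neg_ne_bot hβ0)

theorem mem_leviSubspace_or_mem_perp (hH : H ≤ p) {α : H → K} {x : L} (hxp : x ∈ p)
    (hx : x ∈ rootSubspace H α) : x ∈ leviSubspace H p ∨ x ∈ perp p.toSubmodule := by
  obtain rfl | hx0 := eq_or_ne x 0
  · exact .inl (zero_mem _)
  obtain rfl | hα := eq_or_ne α 0
  · exact .inl (le_leviSubspace hH (rootSubspace_zero (H := H) ▸ hx))
  by_cases hnα : rootSubspace H (-α) ≤ p.toSubmodule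
  · exact .inl (rootSubspace_le_leviSubspace (rootSubspace_le_of_mem hα hx hx0 hxp) hnα hx)
  refine .inr (mem_perp_of_forall_mem_rootSubspace hH hx fun v hv hvα => ?_)
  by_contra hne
  exact hnα (rootSubspace_le_of_mem (neg_ne_zero.mpr hα) hvα (fun h0 => hne (by simp [h0])) hv)

theorem leviSubspace_sup_perp (hp : IsParabolic p) (hH : H ≤ p) :
    leviSubspace H p ⊔ perp p.toSubmodule = p.toSubmodule := by
  refine le_antisymm (sup_le leviSubspace_le hp.perp_le)
    (le_of_forall_mem_rootSubspace (fun h hh u hu => p.lie_mem (hH hh) hu) fun α x hxp hx => ?_)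
  exact (mem_leviSubspace_or_mem_perp hH hxp hx).elim
    (fun h => Submodule.mem_sup_left h) fun h => Submodule.mem_sup_right h

theorem leviSubspace_inf_perp (hH : H ≤ p) : leviSubspace H p ⊓ perp p.toSubmodule = ⊥ := by
  refine eq_bot_iff.mpr (le_of_forall_mem_rootSubspace (H := H) (fun h hh u hu =>
    ⟨lie_mem_leviSubspace hH (le_leviSubspace hH hh) hu.1,
      lie_mem_perp_toSubmodule (hH hh) hu.2⟩) fun α x ⟨hxl, hxp⟩ hxα => ?_)
  refine eq_zero_of_killingForm_rootSubspace_neg hxα fun y hy => ?_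
  by_cases hnα : rootSubspace H (-α) ≤ p.toSubmodule
  · exact mem_perp.mp hxp y (hnα hy)
  suffices hle : leviSubspace H p ≤ LinearMap.ker (killingForm K L y) by
    rw [killingForm_comm]
    exact hle hxl
  refine iSup₂_le fun β hβ z hz => killingForm_eq_zero_of_mem_rootSubspace hy hz fun h0 => hnα ?_
  rw [neg_add_eq_zero.mp h0]
  exact hβ.2

theorem eq_leviSubspace (hp : IsParabolic p) (hH : H ≤ p) {l : Submodule K L}
    (hl : ∀ h ∈ H, ∀ y ∈ l, ⁅h, y⁆ ∈ l) (hlp : l ≤ p.toSubmodule)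
    (hinf : l ⊓ perp p.toSubmodule = ⊥) (hsup : l ⊔ perp p.toSubmodule = p.toSubmodule) :
    l = leviSubspace H p := by
  have hle : l ≤ leviSubspace H p := le_of_forall_mem_rootSubspace hl fun α x hx hxα => by
    refine (mem_leviSubspace_or_mem_perp hH (hlp hx) hxα).elim id fun h => ?_
    have hx0 : x ∈ (⊥ : Submodule K L) := hinf ▸ Submodule.mem_inf.mpr ⟨hx, h⟩
    exact (Submodule.mem_bot K).mp hx0 ▸ zero_mem _
  refine eq_of_le_of_inf_le_of_sup_le (z := perp p.toSubmodule) hle ?_ ?_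
  · rw [leviSubspace_inf_perp hH]
    exact bot_le
  · rw [leviSubspace_sup_perp hp hH, hsup]

end LeviSubspace

section CartanConj

open LieAlgebra LieModule

theorem mem_of_forall_lie_eq_zero {K L : Type*} [Field K] [LieRing L] [LieAlgebra K L]
    {H : LieSubalgebra K L} [H.IsCartanSubalgebra] {y : L} (h : ∀ z ∈ H, ⁅y, z⁆ = 0) : y ∈ H := by
  rw [← LieSubalgebra.IsCartanSubalgebra.self_normalizing (H := H),
    LieSubalgebra.mem_normalizer_iff]
  exact fun z hz => h z hz ▸ H.zero_mem

variable {L : Type*} [LieRing L] [LieAlgebra ℂ L] [FiniteDimensional ℂ L] [IsKilling ℂ L]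
  {H : LieSubalgebra ℂ L} [H.IsCartanSubalgebra]

theorem eq_of_forall_weight_apply_eq {x y : H} (h : ∀ A : Weight ℂ H L, A x = A y) : x = y := by
  rw [← sub_eq_zero, ← Submodule.mem_bot ℂ, ← IsKilling.iInf_ker_weight_eq_bot (H := H),
    Submodule.mem_iInf]
  exact fun A => LinearMap.mem_ker.mpr ((map_sub _ x y).trans (sub_eq_zero.mpr (h A)))

theorem exists_cartanConj (x : H) : ∃ y : H,
    (∀ A : Weight ℂ H L, A y = starRingEnd ℂ (A x)) ∧
      (killingForm ℂ L (x : L) (y : L) = 0 → x = 0) := by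
  obtain ⟨y, -, heigen, hnil⟩ := exists_conj_semisimplePart (x : L)
  have hcomm : ∀ z ∈ H, ⁅y, z⁆ = 0 := fun z hz => by
    have hxz : ⁅(x : L), z⁆ = (0 : ℂ) • z := by
      rw [zero_smul]
      exact congrArg Subtype.val (trivial_lie_zero H H x ⟨z, hz⟩)
    rw [heigen 0 z hxz, map_zero, zero_smul]
  refine ⟨⟨y, mem_of_forall_lie_eq_zero hcomm⟩, fun A => ?_, fun hxy => Subtype.ext ?_⟩
  · obtain ⟨v, hv, hv0⟩ := A.exists_ne_zero
    have hyv := heigen _ v (lie_eq_smul_of_mem_rootSubspace hv x)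
    have hAy := lie_eq_smul_of_mem_rootSubspace hv ⟨y, mem_of_forall_lie_eq_zero hcomm⟩
    exact smul_left_injective ℂ hv0 (hAy.symm.trans hyv)
  · exact IsKilling.eq_zero_of_isNilpotent_ad_of_mem_isCartanSubalgebra ℂ L H x.2 (hnil hxy)

variable (H) in
/-- Complex conjugation on a Cartan subalgebra, relative to the real form spanned by the
coroots. -/
noncomputable def cartanConj : H →ₛₗ[starRingEnd ℂ] H where
  toFun x := (exists_cartanConj x).choose
  map_add' x y := eq_of_forall_weight_apply_eq (L := L) fun A => by
    have hadd (u v : H) : A (u + v) = A u + A v := map_add (Weight.toLinear ℂ H L A) u v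
    rw [hadd, (exists_cartanConj (x + y)).choose_spec.1, (exists_cartanConj x).choose_spec.1,
      (exists_cartanConj y).choose_spec.1, hadd, map_add]
  map_smul' c x := eq_of_forall_weight_apply_eq (L := L) fun A => by
    have hsmul (a : ℂ) (u : H) : A (a • u) = a * A u := map_smul (Weight.toLinear ℂ H L A) a u
    rw [hsmul, (exists_cartanConj (c • x)).choose_spec.1, (exists_cartanConj x).choose_spec.1,
      hsmul, map_mul]

theorem weight_apply_cartanConj (A : Weight ℂ H L) (x : H) :
    A (cartanConj H x) = starRingEnd ℂ (A x) :=
  (exists_cartanConj x).choose_spec.1 A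

theorem eq_zero_of_killingForm_cartanConj {x : H}
    (h : killingForm ℂ L (x : L) (cartanConj H x : L) = 0) : x = 0 :=
  (exists_cartanConj x).choose_spec.2 h

theorem cartanConj_coroot (A : Weight ℂ H L) :
    cartanConj H (IsKilling.coroot A) = IsKilling.coroot A :=
  eq_of_forall_weight_apply_eq (L := L) fun B => by
    rw [weight_apply_cartanConj, IsKilling.apply_coroot_eq_cast, map_intCast]

end CartanConj

section ConjugateSubspace

open LieAlgebra LieModule

variable {L : Type*} [LieRing L] [LieAlgebra ℂ L] [FiniteDimensional ℂ L] [IsKilling ℂ L]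
  {H : LieSubalgebra ℂ L} [H.IsCartanSubalgebra]

variable (H) in
/-- The image of an `H`-stable subspace `U` under the conjugation of `H`, extended to `L` by an
antilinear map exchanging the root spaces of `α` and `-α`; its orthogonal for the Killing form
thus plays the role of a Hermitian orthogonal of `U`. -/
noncomputable def conjugateSubspace (U : Submodule ℂ L) : Submodule ℂ L :=
  ((U.comap H.toSubmodule.subtype).map (cartanConj H)).map H.toSubmodule.subtype ⊔
    ⨆ (α : H → ℂ) (_ : α ≠ 0 ∧ rootSubspace H α ≤ U), rootSubspace H (-α)

theorem cartanConj_mem_conjugateSubspace {U : Submodule ℂ L} {x : H} (hx : (x : L) ∈ U) :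
    (cartanConj H x : L) ∈ conjugateSubspace H U :=
  Submodule.mem_sup_left (Submodule.mem_map_of_mem (Submodule.mem_map_of_mem hx))

theorem rootSubspace_neg_le_conjugateSubspace {U : Submodule ℂ L} {α : H → ℂ} (hα : α ≠ 0)
    (hU : rootSubspace H α ≤ U) : rootSubspace H (-α) ≤ conjugateSubspace H U :=
  (le_iSup₂ (f := fun (α : H → ℂ) (_ : α ≠ 0 ∧ rootSubspace H α ≤ U) => rootSubspace H (-α))
    α ⟨hα, hU⟩).trans le_sup_right

theorem conjugateSubspace_le {U W : Submodule ℂ L}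
    (hconj : ∀ x : H, (x : L) ∈ U → (cartanConj H x : L) ∈ W)
    (hroot : ∀ α : H → ℂ, α ≠ 0 → rootSubspace H α ≤ U → rootSubspace H (-α) ≤ W) :
    conjugateSubspace H U ≤ W := by
  refine sup_le ?_ (iSup₂_le fun α hα => hroot α hα.1 hα.2)
  rintro _ ⟨_, ⟨x, hx, rfl⟩, rfl⟩
  exact hconj x hx

theorem lie_cartanConj_mem_conjugateSubspace {U : Submodule ℂ L} {β : H → ℂ} {e : L}
    (he : e ∈ rootSubspace H β) (hU : ∀ f ∈ rootSubspace H (-β), ∀ u ∈ U, ⁅f, u⁆ ∈ U) {a : H}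
    (ha : (a : L) ∈ U) : ⁅e, (cartanConj H a : L)⁆ ∈ conjugateSubspace H U := by
  refine lie_mem_comm.mp ?_
  rw [lie_eq_smul_of_mem_rootSubspace he]
  obtain rfl | he0 := eq_or_ne e 0
  · rw [smul_zero]
    exact zero_mem _
  obtain ⟨B, rfl⟩ := exists_weight_coe_eq ((Submodule.ne_bot_iff _).mpr ⟨e, he, he0⟩)
  obtain hBa | hBa := eq_or_ne (B a) 0
  · rw [weight_apply_cartanConj, hBa, map_zero, zero_smul]
    exact zero_mem _
  have hB : (B : H → ℂ) ≠ 0 := fun h => hBa (congrFun h a)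
  have hle : rootSubspace H (-B) ≤ U := fun f hf => by
    have hfa := lie_mem_comm.mp (hU f hf a ha)
    rwa [lie_eq_smul_of_mem_rootSubspace hf, Pi.neg_apply,
      U.smul_mem_iff (neg_ne_zero.mpr hBa)] at hfa
  have heV := rootSubspace_neg_le_conjugateSubspace (neg_ne_zero.mpr hB) hle
  rw [neg_neg] at heV
  exact Submodule.smul_mem _ _ (heV he)

theorem lie_rootSubspace_neg_mem_conjugateSubspace {U : Submodule ℂ L} {α β : H → ℂ} {e y : L}
    (he : e ∈ rootSubspace H β) (hU : ∀ f ∈ rootSubspace H (-β), ∀ u ∈ U, ⁅f, u⁆ ∈ U)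
    (hα : α ≠ 0) (hαU : rootSubspace H α ≤ U) (hy : y ∈ rootSubspace H (-α)) :
    ⁅e, y⁆ ∈ conjugateSubspace H U := by
  obtain hey | hey := eq_or_ne ⁅e, y⁆ 0
  · exact hey ▸ zero_mem _
  have he0 : rootSubspace H β ≠ ⊥ :=
    (Submodule.ne_bot_iff _).mpr ⟨e, he, fun h => hey (by rw [h, zero_lie])⟩
  have hy0 : rootSubspace H (-α) ≠ ⊥ :=
    (Submodule.ne_bot_iff _).mpr ⟨y, hy, fun h => hey (by rw [h, lie_zero])⟩
  obtain rfl | hne := eq_or_ne α β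
  · obtain ⟨A, rfl⟩ := exists_weight_coe_eq he0
    obtain ⟨c, hc⟩ := exists_smul_coroot_eq_lie hα he hy
    have hcU : c • (IsKilling.coroot A : L) ∈ U := hc ▸ lie_mem_comm.mp (hU y hy e (hαU he))
    rw [U.smul_mem_iff (fun h => hey (by rw [← hc, h, zero_smul]))] at hcU
    rw [← hc, ← cartanConj_coroot]
    exact Submodule.smul_mem _ _ (cartanConj_mem_conjugateSubspace hcU)
  · have hα0 := rootSubspace_neg_ne_bot hy0
    rw [neg_neg] at hα0
    have hne' : α + -β ≠ 0 := fun h => hne (add_neg_eq_zero.mp h)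
    have hle := rootSubspace_neg_le_conjugateSubspace hne'
      (rootSubspace_add_le hαU hα0 (rootSubspace_neg_ne_bot he0) hne' hU)
    rw [neg_add_rev, neg_neg] at hle
    exact hle (lie_mem_rootSubspace_add he hy)

theorem lie_mem_conjugateSubspace {U : Submodule ℂ L} {β : H → ℂ} {e v : L}
    (he : e ∈ rootSubspace H β) (hU : ∀ f ∈ rootSubspace H (-β), ∀ u ∈ U, ⁅f, u⁆ ∈ U)
    (hv : v ∈ conjugateSubspace H U) : ⁅e, v⁆ ∈ conjugateSubspace H U := by
  suffices h : conjugateSubspace H U ≤ (conjugateSubspace H U).comap (ad ℂ L e) from h hv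
  exact conjugateSubspace_le (fun a ha => lie_cartanConj_mem_conjugateSubspace he hU ha)
    fun α hα hαU y hy => lie_rootSubspace_neg_mem_conjugateSubspace he hU hα hαU hy

theorem inf_perp_conjugateSubspace {U : Submodule ℂ L} (hU : ∀ h ∈ H, ∀ u ∈ U, ⁅h, u⁆ ∈ U) :
    U ⊓ perp (conjugateSubspace H U) = ⊥ := by
  have hV : ∀ h ∈ H, ∀ v ∈ conjugateSubspace H U, ⁅h, v⁆ ∈ conjugateSubspace H U :=
    fun h hh v hv => by
      rw [← LieSubalgebra.mem_toSubmodule, ← rootSubspace_zero] at hh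
      refine lie_mem_conjugateSubspace hh (fun f hf u hu => hU f ?_ u hu) hv
      rwa [neg_zero, rootSubspace_zero] at hf
  refine eq_bot_iff.mpr (le_of_forall_mem_rootSubspace (H := H)
    (fun h hh u hu => ⟨hU h hh u hu.1, lie_mem_perp (hV h hh) hu.2⟩) fun α x ⟨hxU, hxV⟩ hxα => ?_)
  by_contra hx0
  obtain rfl | hα := eq_or_ne α 0
  · rw [rootSubspace_zero] at hxα
    refine hx0 (congrArg Subtype.val (eq_zero_of_killingForm_cartanConj (x := ⟨x, hxα⟩) ?_))
    exact mem_perp.mp hxV _ (cartanConj_mem_conjugateSubspace hxU)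
  · refine hx0 (eq_zero_of_killingForm_rootSubspace_neg hxα fun y hy => ?_)
    exact mem_perp.mp hxV y
      (rootSubspace_neg_le_conjugateSubspace hα (rootSubspace_le_of_mem hα hxα hx0 hxU) hy)

theorem map_sup_perp_map_cartanConj (T : Submodule ℂ H) :
    T.map H.toSubmodule.subtype ⊔ perp ((T.map (cartanConj H)).map H.toSubmodule.subtype) = ⊤ := by
  set S := (T.map (cartanConj H)).map H.toSubmodule.subtype with hS
  suffices hbot : perp (T.map H.toSubmodule.subtype ⊔ perp S) = ⊥ by
    rw [← perp_perp (T.map H.toSubmodule.subtype ⊔ perp S), hbot, perp_bot]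
  refine (Submodule.eq_bot_iff _).mpr fun y hy => ?_
  have hyS : y ∈ S := perp_perp S ▸ perp_anti le_sup_right hy
  rw [hS] at hyS
  obtain ⟨_, ⟨a, ha, rfl⟩, rfl⟩ := hyS
  have ha0 : a = 0 := eq_zero_of_killingForm_cartanConj <| by
    rw [killingForm_comm]
    exact mem_perp.mp (perp_anti le_sup_left hy) a (Submodule.mem_map_of_mem ha)
  rw [ha0, map_zero, map_zero]

theorem toSubmodule_le_sup_perp_conjugateSubspace (U : Submodule ℂ L) :
    H.toSubmodule ≤ U ⊔ perp (conjugateSubspace H U) := by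
  intro x hx
  have hx' : x ∈ (⊤ : Submodule ℂ L) := trivial
  rw [← map_sup_perp_map_cartanConj (U.comap H.toSubmodule.subtype)] at hx'
  obtain ⟨_, ⟨u, hu, rfl⟩, w, hw, rfl⟩ := Submodule.mem_sup.mp hx'
  refine Submodule.add_mem_sup hu ?_
  suffices hle : conjugateSubspace H U ≤ LinearMap.ker (killingForm ℂ L w) from mem_perp.mpr hle
  have hw0 : w ∈ rootSubspace H 0 := by
    rw [rootSubspace_zero]
    exact (H.toSubmodule.add_mem_iff_right u.2).mp hx
  refine conjugateSubspace_le (fun a ha => mem_perp.mp hw _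
    (Submodule.mem_map_of_mem (Submodule.mem_map_of_mem ha))) fun α hα _ y hy => ?_
  exact killingForm_eq_zero_of_mem_rootSubspace hw0 hy (by rwa [zero_add, neg_ne_zero])

theorem sup_perp_conjugateSubspace (U : Submodule ℂ L) :
    U ⊔ perp (conjugateSubspace H U) = ⊤ := by
  refine eq_top_iff.mpr (le_of_forall_mem_rootSubspace (H := H) (fun _ _ _ _ => trivial)
    fun α x _ hx => ?_)
  obtain rfl | hα := eq_or_ne α 0
  · exact toSubmodule_le_sup_perp_conjugateSubspace U (rootSubspace_zero (H := H) ▸ hx)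
  by_cases hαU : rootSubspace H α ≤ U
  · exact Submodule.mem_sup_left (hαU hx)
  refine Submodule.mem_sup_right ?_
  suffices hle : conjugateSubspace H U ≤ LinearMap.ker (killingForm ℂ L x) from mem_perp.mpr hle
  refine conjugateSubspace_le (fun a _ => ?_) fun β _ hβU y hy =>
    killingForm_eq_zero_of_mem_rootSubspace hx hy fun h => hαU ?_
  · refine killingForm_eq_zero_of_mem_rootSubspace (β := 0) hx ?_ (by rwa [add_zero])
    rw [rootSubspace_zero]
    exact (cartanConj H a).2
  · rwa [add_neg_eq_zero.mp h]

theorem exists_isCompl_of_leviSubspace {p : LieSubalgebra ℂ L} (hH : H ≤ p) {U : Submodule ℂ L}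
    (hU : ∀ x ∈ leviSubspace H p, ∀ u ∈ U, ⁅x, u⁆ ∈ U) :
    ∃ W : Submodule ℂ L, (∀ x ∈ leviSubspace H p, ∀ w ∈ W, ⁅x, w⁆ ∈ W) ∧ IsCompl U W := by
  refine ⟨perp (conjugateSubspace H U), fun x hx w hw => lie_mem_perp (fun v hv => ?_) hw,
    disjoint_iff.mpr (inf_perp_conjugateSubspace fun h hh => hU h (le_leviSubspace hH hh)),
    codisjoint_iff.mpr (sup_perp_conjugateSubspace U)⟩
  refine leviSubspace_induction (P := fun x => ⁅x, v⁆ ∈ conjugateSubspace H U) ?_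
    (fun a b ha hb => ?_) (fun α hα hnα e he => ?_) hx
  · rw [zero_lie]
    exact zero_mem _
  · rw [add_lie]
    exact add_mem ha hb
  · refine lie_mem_conjugateSubspace he (fun f hf => hU f (rootSubspace_le_leviSubspace hnα ?_ hf))
      hv
    rwa [neg_neg]

end ConjugateSubspace

section Sweep

open Topology

section Normed

variable {𝕜 𝔸 ι : Type*} [NontriviallyNormedField 𝕜]

theorem hasStrictFDerivAt_list_prod_of_eq_one [Finite ι] [NormedRing 𝔸] [NormedAlgebra 𝕜 𝔸]
    {E : ι → 𝕜 → 𝔸} {A : ι → 𝔸} (hE₀ : ∀ i, E i 0 = 1)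
    (hE : ∀ i, HasStrictDerivAt (E i) (A i) 0) (l : List ι) :
    HasStrictFDerivAt (fun t : ι → 𝕜 => (l.map fun i => E i (t i)).prod)
      (l.map fun i => (ContinuousLinearMap.proj (R := 𝕜) (φ := fun _ => 𝕜) i).smulRight (A i)).sum
      0 := by
  cases nonempty_fintype ι
  induction l with
  | nil => exact hasStrictFDerivAt_const 1 0
  | cons i l ih =>
    have hi := HasStrictFDerivAt.comp (g := E i) (0 : ι → 𝕜) (hE i).hasStrictFDerivAt
      (ContinuousLinearMap.proj (R := 𝕜) (φ := fun _ : ι => 𝕜) i).hasStrictFDerivAt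
    refine (hi.mul' ih).congr_fderiv (ContinuousLinearMap.ext fun t => ?_)
    simp [hE₀, add_comm]

theorem eventually_exists_list_prod_apply_eq {V : Type*} [Fintype ι] [CompleteSpace 𝕜]
    [NormedAddCommGroup V] [NormedSpace 𝕜 V] [FiniteDimensional 𝕜 V]
    {E : ι → 𝕜 → V →L[𝕜] V} {A : ι → V →L[𝕜] V}
    (hE₀ : ∀ i, E i 0 = 1) (hE : ∀ i, HasStrictDerivAt (E i) (A i) 0) {J : Submodule 𝕜 V} {v : V}
    (hv : v ∈ J) (hJ : J ⊔ Submodule.span 𝕜 (Set.range fun i => A i v) = ⊤) :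
    ∀ᶠ y in 𝓝 v, ∃ t : ι → 𝕜, ∃ h ∈ J,
      (Finset.univ.toList.map fun i => E i (t i)).prod h = y := by
  classical
  have hcomplete : CompleteSpace V := FiniteDimensional.complete 𝕜 V
  have hcompleteJ : CompleteSpace J := FiniteDimensional.complete 𝕜 J
  let q₀ : (ι → 𝕜) × J := (0, ⟨v, hv⟩)
  have hprod := (hasStrictFDerivAt_list_prod_of_eq_one hE₀ hE Finset.univ.toList).comp
    (f := Prod.fst) q₀ hasStrictFDerivAt_fst
  have hderiv := hprod.clm_apply
    (J.subtypeL.hasStrictFDerivAt.comp (f := Prod.snd) q₀ hasStrictFDerivAt_snd)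
  have hsurj := hderiv.map_nhds_eq_of_surj (by
    rw [eq_top_iff, ← hJ, sup_le_iff, Submodule.span_le, Set.range_subset_iff]
    refine ⟨fun h hh => ⟨(0, ⟨h, hh⟩), ?_⟩, fun i => ⟨(Pi.single i 1, 0), ?_⟩⟩
    · simp [q₀, hE₀]
    · simp [q₀, Finset.sum_map_toList, Pi.single_apply])
  have hq₀ : (Finset.univ.toList.map fun i => E i (q₀.1 i)).prod (J.subtypeL q₀.2) = v := by
    simp [q₀, hE₀]
  rw [← hq₀, ← hsurj, Filter.eventually_map]
  exact Filter.Eventually.of_forall fun q => ⟨q.1, q.2, q.2.2, rfl⟩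

end Normed

/-- The exponential series of `a` truncated after `N` terms, which is the exponential of `a`
whenever `a ^ N = 0`; `expEnd` is the case `N = finrank ℂ g + 1`. -/
noncomputable def expSum {𝔸 : Type*} [Ring 𝔸] [Algebra ℂ 𝔸] (N : ℕ) (a : 𝔸) : 𝔸 :=
  ∑ k ∈ Finset.range N, ((k.factorial : ℂ)⁻¹) • a ^ k

theorem map_expSum {𝔸 𝔹 : Type*} [Ring 𝔸] [Algebra ℂ 𝔸] [Ring 𝔹] [Algebra ℂ 𝔹]
    (φ : 𝔸 →ₐ[ℂ] 𝔹) (N : ℕ) (a : 𝔸) : φ (expSum N a) = expSum N (φ a) := by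
  simp only [expSum, map_sum, map_smul, map_pow]

theorem expSum_zero {𝔸 : Type*} [Ring 𝔸] [Algebra ℂ 𝔸] {N : ℕ} (hN : N ≠ 0) :
    expSum N (0 : 𝔸) = 1 := by
  obtain ⟨N, rfl⟩ := Nat.exists_eq_succ_of_ne_zero hN
  simp [expSum, Finset.sum_range_succ']

theorem hasStrictDerivAt_expSum_smul {𝔸 : Type*} [NormedRing 𝔸] [NormedAlgebra ℂ 𝔸] {N : ℕ}
    (hN : 2 ≤ N) (a : 𝔸) : HasStrictDerivAt (fun t : ℂ => expSum N (t • a)) a 0 := by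
  obtain ⟨N, rfl⟩ := Nat.exists_eq_add_of_le' hN
  have hterm : ∀ k ∈ Finset.range (N + 2), HasStrictDerivAt
      (fun t : ℂ => ((k.factorial : ℂ)⁻¹) • (t ^ k) • a ^ k)
      (((k.factorial : ℂ)⁻¹) • (k * 0 ^ (k - 1) : ℂ) • a ^ k) 0 := fun k _ =>
    ((hasStrictDerivAt_pow k (0 : ℂ)).smul_const (a ^ k)).fun_const_smul _
  simpa [expSum, smul_pow, Finset.sum_range_succ'] using HasStrictDerivAt.fun_sum hterm

theorem eventually_exists_mem_closure_expSum_apply_eq {W : Type*} [AddCommGroup W] [Module ℂ W]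
    [FiniteDimensional ℂ W] {N : ℕ} (hN : 2 ≤ N) {S : Set (End ℂ W)}
    (hS : ∀ A ∈ S, ∀ t : ℂ, t • A ∈ S) {J : Submodule ℂ W} {v : W} (hv : v ∈ J)
    (hJ : J ⊔ Submodule.span ℂ ((fun A => A v) '' S) = ⊤) (w : W) :
    ∀ᶠ s in 𝓝 (0 : ℂ), ∃ e ∈ Submonoid.closure (expSum N '' S), ∃ h ∈ J, e h = v + s • w := by
  classical
  let norm : NormedAddCommGroup W := .induced W _ (finBasis ℂ W).equivFun
    (finBasis ℂ W).equivFun.injective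
  let normedSpace : NormedSpace ℂ W := .induced ℂ W _ (finBasis ℂ W).equivFun
  obtain ⟨T, hTS, hT⟩ := (Submodule.fg_span_iff_fg_span_finset_subset _).mp
    (IsNoetherian.noetherian (Submodule.span ℂ ((fun A : End ℂ W => A v) '' S)))
  obtain ⟨F, hFS, rfl⟩ := Finset.subset_set_image_iff.mp hTS
  let A (i : F) : W →L[ℂ] W := Module.End.toContinuousLinearMap W i.1
  have hspan : J ⊔ Submodule.span ℂ (Set.range fun i => A i v) = ⊤ := by
    rw [← hJ, hT, Finset.coe_image, Set.image_eq_range]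
    rfl
  have hev := eventually_exists_list_prod_apply_eq (E := fun i t => expSum N (t • A i))
    (fun i => by rw [zero_smul, expSum_zero (by omega)])
    (fun i => hasStrictDerivAt_expSum_smul hN (A i)) hv hspan
  have hline : Filter.Tendsto (fun s : ℂ => v + s • w) (𝓝 0) (𝓝 v) := by
    have hcont : Continuous fun s : ℂ => v + s • w := by fun_prop
    simpa using hcont.tendsto 0
  filter_upwards [hline.eventually hev] with s ⟨t, h, hh, heq⟩
  refine ⟨(Finset.univ.toList.map fun i : F => expSum N (t i • i.1)).prod,
    Submonoid.list_prod_mem _ ?_, h, hh, ?_⟩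
  · simp only [List.mem_map, forall_exists_index, and_imp]
    rintro _ i - rfl
    exact Submonoid.subset_closure ⟨_, hS _ (hFS i.2) _, rfl⟩
  · have hprod : Module.End.toContinuousLinearMap W
        (Finset.univ.toList.map fun i : F => expSum N (t i • i.1)).prod =
          (Finset.univ.toList.map fun i => expSum N (t i • A i)).prod := by
      rw [map_list_prod, List.map_map]
      congr 2
      exact funext fun i => map_expSum (Module.End.toContinuousLinearMap W).toAlgHom N _
    rw [← heq, ← hprod]
    rfl

end Sweep

section InnerAutomorphisms

open LieAlgebra
open scoped Pointwise

theorem pow_finrank_eq_zero_of_isNilpotent {K V : Type*} [Field K] [AddCommGroup V] [Module K V]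
    [FiniteDimensional K V] {f : End K V} (hf : IsNilpotent f) : f ^ finrank K V = 0 := by
  simpa [hf.charpoly_eq_X_pow_finrank] using f.aeval_self_charpoly

variable {L : Type*} [LieRing L] [LieAlgebra ℂ L]

/-- The inner automorphisms of `L` that preserve `p`, playing the role of the analytic subgroup
with Lie algebra `p` when `p` is parabolic. -/
noncomputable def innerStabilizer (p : Submodule ℂ L) : Subgroup (L ≃ₗ[ℂ] L) :=
  innerAut L ⊓ MulAction.stabilizer (L ≃ₗ[ℂ] L) p

theorem innerStabilizer_smul_eq {p : Submodule ℂ L} {e : L ≃ₗ[ℂ] L} (he : e ∈ innerStabilizer p) :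
    e • p = p := he.2

variable [FiniteDimensional ℂ L]

theorem exists_lieEquiv_eq_expEnd {x : L} (hx : IsNilpotent (ad ℂ L x)) :
    ∃ e : L ≃ₗ⁅ℂ⁆ L, (e.toLinearEquiv : L →ₗ[ℂ] L) = expEnd L (ad ℂ L x) := by
  -- The exponential of a nilpotent derivation in Mathlib is taken over `ℚ`.
  let rat : Module ℚ L := Module.compHom L (algebraMap ℚ ℂ)
  let lieRat : LieAlgebra ℚ L := { rat with lie_smul := fun q y z => lie_smul (q : ℂ) y z }
  have : IsScalarTower ℚ ℂ L := IsScalarTower.of_algebraMap_smul fun _ _ => rfl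
  have had : (LieDerivation.ad ℂ L x).toLinearMap = ad ℂ L x := by
    ext y
    simp
  have hpow : ad ℂ L x ^ (finrank ℂ L + 1) = 0 := by
    rw [pow_succ, pow_finrank_eq_zero_of_isNilpotent hx, zero_mul]
  refine ⟨LieDerivation.exp (LieDerivation.ad ℂ L x) (had ▸ hx), ?_⟩
  calc _ = IsNilpotent.exp (LieDerivation.ad ℂ L x).toLinearMap := rfl
    _ = IsNilpotent.exp (ad ℂ L x) := by rw [had]
    _ = _ := IsNilpotent.exp_eq_sum hpow
    _ = expEnd L (ad ℂ L x) := Finset.sum_congr rfl fun _ _ => inv_natCast_smul_eq ℚ ℂ _ _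

theorem innerAut_map_lie {e : L ≃ₗ[ℂ] L} (he : e ∈ innerAut L) (x y : L) :
    e ⁅x, y⁆ = ⁅e x, e y⁆ := by
  induction he using Subgroup.closure_induction generalizing x y with
  | mem e h =>
    obtain ⟨z, hz, h⟩ := h
    obtain ⟨e', he'⟩ := exists_lieEquiv_eq_expEnd hz
    obtain rfl : e = e'.toLinearEquiv := LinearEquiv.toLinearMap_injective (h.trans he'.symm)
    exact e'.map_lie x y
  | one => rfl
  | mul a b _ _ ha hb => simp only [LinearEquiv.mul_apply, hb, ha]
  | inv a _ ha =>
    apply a.injective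
    rw [ha]
    simp only [← LinearEquiv.mul_apply, mul_inv_cancel, LinearEquiv.coe_one, id_eq]

theorem exists_mem_innerStabilizer_eq_expSum {p : LieSubalgebra ℂ L} {x : p}
    (hx : IsNilpotent (ad ℂ L (x : L))) : ∃ e ∈ innerStabilizer p.toSubmodule, ∀ v : p,
      e v = (expSum (finrank ℂ L + 1) (ad ℂ p x) v : p) := by
  obtain ⟨e, he⟩ := exists_lieEquiv_eq_expEnd hx
  have hpow (k : ℕ) (v : p) : (ad ℂ L (x : L) ^ k) v = ((ad ℂ p x ^ k) v : p) := by
    induction k with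
    | zero => rfl
    | succ k ih =>
      simp only [pow_succ', Module.End.mul_apply, ih, ad_apply, LieSubalgebra.coe_bracket]
  have hexp (v : p) : e.toLinearEquiv v = (expSum (finrank ℂ L + 1) (ad ℂ p x) v : p) := by
    rw [← LinearEquiv.coe_coe, he]
    simp [expEnd, expSum, hpow]
  refine ⟨e.toLinearEquiv, ⟨Subgroup.subset_closure ⟨x, hx, he⟩, ?_⟩, hexp⟩
  refine Submodule.eq_of_le_of_finrank_eq ?_ (LinearEquiv.finrank_map_eq e.toLinearEquiv _)
  rintro _ ⟨v, hv, rfl⟩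
  exact hexp ⟨v, hv⟩ ▸ Subtype.property _

theorem exists_mem_innerStabilizer_of_mem_closure {p : LieSubalgebra ℂ L} {f : End ℂ p}
    (hf : f ∈ Submonoid.closure (expSum (finrank ℂ L + 1) ''
      {A : End ℂ p | ∃ x : p, IsNilpotent (ad ℂ L (x : L)) ∧ ad ℂ p x = A})) :
    ∃ e ∈ innerStabilizer p.toSubmodule, ∀ v : p, e v = f v := by
  induction hf using Submonoid.closure_induction with
  | mem f hf =>
    obtain ⟨_, ⟨x, hx, rfl⟩, rfl⟩ := hf
    exact exists_mem_innerStabilizer_eq_expSum hx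
  | one => exact ⟨1, one_mem _, fun v => rfl⟩
  | mul f f' _ _ ih ih' =>
    obtain ⟨e, he, hef⟩ := ih
    obtain ⟨e', he', hef'⟩ := ih'
    exact ⟨e * e', mul_mem he he', fun v => by
      rw [LinearEquiv.mul_apply, hef', hef, Module.End.mul_apply]⟩

end InnerAutomorphisms

section RegularElements

open LieAlgebra LieModule LieSubalgebra

theorem le_engel_of_mem {R L : Type*} [CommRing R] [LieRing L] [LieAlgebra R L]
    {H : LieSubalgebra R L} [IsLieAbelian H] {x : L} (hx : x ∈ H) : H ≤ engel R x := fun y hy => by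
  rw [mem_engel_iff]
  exact ⟨1, by simpa using congrArg Subtype.val (trivial_lie_zero H H ⟨x, hx⟩ ⟨y, hy⟩)⟩

section Field

variable {K L : Type*} [Field K] [CharZero K] [IsAlgClosed K] [LieRing L] [LieAlgebra K L]
  [FiniteDimensional K L] [IsKilling K L] {H : LieSubalgebra K L} [H.IsCartanSubalgebra]

theorem apply_ne_zero_of_engel_eq {h₀ : H} (h : engel K (h₀ : L) = H) {α : H → K} (hα : α ≠ 0)
    {x : L} (hx : x ∈ rootSubspace H α) (hx0 : x ≠ 0) : α h₀ ≠ 0 := by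
  intro hzero
  have hxH : x ∈ H := by
    rw [← h, mem_engel_iff]
    exact ⟨1, by simp [lie_eq_smul_of_mem_rootSubspace hx, hzero]⟩
  refine hα (funext fun k => ?_)
  have hk : ⁅(k : L), x⁆ = 0 := congrArg Subtype.val (trivial_lie_zero H H k ⟨x, hxH⟩)
  simpa [lie_eq_smul_of_mem_rootSubspace hx, hx0] using hk

theorem engel_eq_of_forall_weight_apply_ne_zero {h₀ : H}
    (h : ∀ A : Weight K H L, A.IsNonZero → A h₀ ≠ 0) : engel K (h₀ : L) = H := by
  refine le_antisymm ?_ (le_engel_of_mem h₀.2)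
  refine le_of_forall_mem_rootSubspace (U := (engel K (h₀ : L)).toSubmodule) (W := H.toSubmodule)
    (fun k hk u hu => lie_mem _ (le_engel_of_mem h₀.2 hk) hu) fun α x hx hxα => ?_
  obtain rfl | hx0 := eq_or_ne x 0
  · exact zero_mem _
  obtain ⟨A, rfl⟩ := exists_weight_coe_eq (Submodule.ne_bot_iff _ |>.mpr ⟨x, hxα, hx0⟩)
  by_cases hA : A.IsZero
  · rwa [hA, rootSubspace_zero] at hxα
  obtain ⟨n, hn⟩ := (mem_engel_iff K _ _).mp hx
  have hpow (n : ℕ) : (ad K L (h₀ : L) ^ n) x = A h₀ ^ n • x := by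
    induction n with
    | zero => simp
    | succ n ih =>
      rw [pow_succ', Module.End.mul_apply, ih, map_smul, ad_apply,
        lie_eq_smul_of_mem_rootSubspace hxα, smul_smul, pow_succ]
  exact absurd (hpow n ▸ hn) (smul_ne_zero (pow_ne_zero n (h A hA)) hx0)

theorem exists_engel_eq : ∃ h₀ : H, engel K (h₀ : L) = H := by
  obtain ⟨h₀, h⟩ := Module.Dual.exists_forall_ne_zero_of_forall_exists
    (f := fun A : {A : Weight K H L // A.IsNonZero} => A.1.toLinear)
    fun ⟨A, hA⟩ => by
      by_contra! hzero
      exact hA (funext hzero)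
  exact ⟨h₀, engel_eq_of_forall_weight_apply_ne_zero fun A hA => h ⟨A, hA⟩⟩

theorem toSubmodule_le_sup_span_lie {p : LieSubalgebra K L} (hH : H ≤ p) {h₀ : H}
    (h : engel K (h₀ : L) = H) : p.toSubmodule ≤ H.toSubmodule ⊔
      Submodule.span K {z | ∃ x ∈ p, IsNilpotent (ad K L x) ∧ ⁅x, (h₀ : L)⁆ = z} := by
  refine le_of_forall_mem_rootSubspace (H := H) (fun k hk u hu => p.lie_mem (hH hk) hu)
    fun α x hx hxα => ?_
  obtain rfl | hx0 := eq_or_ne x 0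
  · exact zero_mem _
  obtain rfl | hα := eq_or_ne α 0
  · exact Submodule.mem_sup_left (rootSubspace_zero (H := H) ▸ hxα)
  refine Submodule.mem_sup_right (Submodule.subset_span
    ⟨-(α h₀)⁻¹ • x, p.smul_mem _ hx, ?_, ?_⟩)
  · rw [map_smul]
    exact (isNilpotent_ad_of_mem_rootSpace H hα hxα).smul _
  · rw [smul_lie, ← lie_skew, lie_eq_smul_of_mem_rootSubspace hxα, neg_smul_neg,
      inv_smul_smul₀ (apply_ne_zero_of_engel_eq h hα hxα hx0)]

end Field

open Topology

variable {L : Type*} [LieRing L] [LieAlgebra ℂ L] [FiniteDimensional ℂ L] [IsKilling ℂ L]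

-- The map `(e, h) ↦ e h` is a submersion at `(1, h₀)`, because `p = H + [p, h₀]`.
theorem eventually_exists_mem_innerStabilizer_apply_eq {H p : LieSubalgebra ℂ L}
    [H.IsCartanSubalgebra] (hH : H ≤ p) {h₀ : H} (h : engel ℂ (h₀ : L) = H) {w : L} (hw : w ∈ p) :
    ∀ᶠ s in 𝓝 (0 : ℂ), ∃ e ∈ innerStabilizer p.toSubmodule, ∃ k ∈ H, e k = h₀ + s • w := by
  obtain hL | hL := subsingleton_or_nontrivial L
  · exact .of_forall fun s => ⟨1, one_mem _, 0, zero_mem _, Subsingleton.elim _ _⟩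
  let S : Set (End ℂ p) := {A | ∃ x : p, IsNilpotent (ad ℂ L (x : L)) ∧ ad ℂ p x = A}
  have hS : ∀ A ∈ S, ∀ t : ℂ, t • A ∈ S := by
    rintro _ ⟨x, hx, rfl⟩ t
    exact ⟨t • x, by simpa using hx.smul t, map_smul _ _ _⟩
  have htop : H.toSubmodule.comap p.toSubmodule.subtype ⊔
      Submodule.span ℂ ((fun A => A ⟨h₀, hH h₀.2⟩) '' S) = ⊤ := by
    have hle : H.toSubmodule ≤ p.toSubmodule := hH
    refine Submodule.map_injective_of_injective p.toSubmodule.injective_subtype ?_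
    rw [Submodule.map_sup, Submodule.map_comap_subtype, Submodule.map_span, Submodule.map_top,
      Submodule.range_subtype, inf_eq_right.mpr hle]
    refine le_antisymm (sup_le hH ?_) ((toSubmodule_le_sup_span_lie hH h).trans ?_)
    · rw [Submodule.span_le]
      rintro _ ⟨y, -, rfl⟩
      exact y.2
    · refine sup_le_sup_left (Submodule.span_mono ?_) _
      rintro _ ⟨x, hx, hnil, rfl⟩
      exact ⟨_, ⟨_, ⟨⟨x, hx⟩, hnil, rfl⟩, rfl⟩, rfl⟩
  filter_upwards [eventually_exists_mem_closure_expSum_apply_eq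
    (Nat.succ_le_succ (finrank_pos (R := ℂ) (M := L))) hS h₀.2 htop ⟨w, hw⟩]
    with s ⟨f, hf, k, hk, hfk⟩
  obtain ⟨e, he, hef⟩ := exists_mem_innerStabilizer_of_mem_closure hf
  exact ⟨e, he, k, hk, by rw [hef, hfk]; rfl⟩

end RegularElements

section Conjugacy

open LieAlgebra LieSubalgebra Topology
open scoped Pointwise

section Field

variable {K L : Type*} [Field K] [LieRing L] [LieAlgebra K L] [FiniteDimensional K L]

section

attribute [local instance] LieRing.ofAssociativeRing

theorem exists_polynomial_isRegular_iff (x y : L) :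
    ∃ q : Polynomial K, ∀ s : K, IsRegular K (x + s • y) ↔ q.eval s ≠ 0 := by
  let b := Module.Free.chooseBasis K L
  classical
  refine ⟨MvPolynomial.aeval
    (fun i => Polynomial.C (b.repr y i) * Polynomial.X + Polynomial.C (b.repr x i))
    ((LinearMap.polyCharpoly (ad K L).toLinearMap b).coeff (LieAlgebra.rank K L)), fun s => ?_⟩
  have hrepr : (fun i => b.repr y i * s + b.repr x i) = b.repr (x + s • y) := by
    ext i
    simp [mul_comm s, add_comm]
  rw [isRegular_iff_coeff_polyCharpoly_rank_ne_zero K b, ← hrepr,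
    ← Polynomial.coe_aeval_eq_eval, ← AlgHom.comp_apply, MvPolynomial.comp_aeval]
  simp

end

theorem finite_setOf_not_isRegular_add_smul {x y : L} {s : K} (hs : IsRegular K (x + s • y)) :
    {s : K | ¬ IsRegular K (x + s • y)}.Finite := by
  obtain ⟨q, hq⟩ := exists_polynomial_isRegular_iff (K := K) x y
  have hq0 : q ≠ 0 := by
    rintro rfl
    exact (hq s).mp hs Polynomial.eval_zero
  simpa only [hq, not_not, Polynomial.IsRoot.def] using Polynomial.finite_setOfPred_isRoot hq0

variable [Infinite K]

theorem isCartanSubalgebra_engel_of_isRegular {x : L} (hx : IsRegular K x) :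
    (engel K x).IsCartanSubalgebra := by
  refine ⟨isNilpotent_of_forall_le_engel _ fun y hy => ?_, normalizer_engel _ _⟩
  let E : {engel K z | z ∈ engel K x} := ⟨engel K x, x, self_mem_engel _ _, rfl⟩
  refine engel_isBot_of_isMin (Cardinal.natCast_le_aleph0.trans
    (Cardinal.infinite_iff.mp inferInstance)) (engel K x) E le_rfl ?_ ⟨engel K y, y, hy, rfl⟩
  rintro ⟨_, z, hz, rfl⟩ hzx
  have hfinrank : finrank K (engel K x) ≤ finrank K (engel K z) :=
    (isRegular_iff_finrank_engel_eq_rank K x).mp hx ▸ rank_le_finrank_engel K z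
  exact (toSubmodule_injective (Submodule.eq_of_le_of_finrank_le hzx hfinrank)).ge

variable [IsKilling K L]

theorem engel_eq_engel_of_mem {x y : L} (hx : IsRegular K x) (hy : IsRegular K y)
    (h : y ∈ engel K x) : engel K y = engel K x := by
  have := isCartanSubalgebra_engel_of_isRegular hx
  rw [isRegular_iff_finrank_engel_eq_rank] at hx hy
  exact (toSubmodule_injective
    (Submodule.eq_of_le_of_finrank_eq (le_engel_of_mem h) (hx.trans hy.symm))).symm

theorem eq_zero_of_isNilpotent_ad_of_lie_eq_zero {x y : L} (hx : IsRegular K x)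
    (hy : IsNilpotent (ad K L y)) (hxy : ⁅x, y⁆ = 0) : y = 0 := by
  have hcartan := isCartanSubalgebra_engel_of_isRegular hx
  have hyx : y ∈ engel K x := (mem_engel_iff K x y).mpr ⟨1, by simpa using hxy⟩
  exact IsKilling.eq_zero_of_isNilpotent_ad_of_mem_isCartanSubalgebra K L (engel K x) hyx hy

end Field

variable {L : Type*} [LieRing L] [LieAlgebra ℂ L] [FiniteDimensional ℂ L]

theorem smul_engel {e : L ≃ₗ[ℂ] L} (he : e ∈ innerAut L) (x : L) :
    e • (engel ℂ x).toSubmodule = (engel ℂ (e x)).toSubmodule := by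
  have hpow (n : ℕ) (z : L) : (ad ℂ L (e x) ^ n) (e z) = e ((ad ℂ L x ^ n) z) := by
    induction n with
    | zero => rfl
    | succ n ih =>
      simp only [pow_succ', Module.End.mul_apply, ih, ad_apply, innerAut_map_lie he]
  refine Submodule.ext fun z => ?_
  obtain ⟨z, rfl⟩ := e.surjective z
  calc e z ∈ e • (engel ℂ x).toSubmodule
    _ ↔ z ∈ (engel ℂ x).toSubmodule := e.injective.mem_set_image
    _ ↔ e z ∈ (engel ℂ (e x)).toSubmodule := by
      simp only [mem_toSubmodule, mem_engel_iff, hpow, LinearEquiv.map_eq_zero_iff]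

theorem isRegular_apply_iff {e : L ≃ₗ[ℂ] L} (he : e ∈ innerAut L) {x : L} :
    IsRegular ℂ (e x) ↔ IsRegular ℂ x := by
  have hfinrank : finrank ℂ (engel ℂ (e x)) = finrank ℂ (engel ℂ x) := by
    have hmap := LinearEquiv.finrank_map_eq e (engel ℂ x).toSubmodule
    rwa [show (engel ℂ x).toSubmodule.map (e : L →ₗ[ℂ] L) = _ from smul_engel he x] at hmap
  rw [isRegular_iff_finrank_engel_eq_rank, isRegular_iff_finrank_engel_eq_rank, hfinrank]

variable [IsKilling ℂ L]

theorem isRegular_of_engel_eq {H : LieSubalgebra ℂ L} [H.IsCartanSubalgebra] {h₀ : H}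
    (h : engel ℂ (h₀ : L) = H) : IsRegular ℂ (h₀ : L) := by
  obtain ⟨y, hy⟩ := LieAlgebra.exists_isRegular ℂ L
  have hfin := finite_setOf_not_isRegular_add_smul (x := (h₀ : L)) (y := y - h₀) (s := (1 : ℂ))
    (by simpa using hy)
  obtain ⟨s, hs, e, he, k, hk, hek⟩ :=
    ((mem_closure_iff_frequently.mp (hfin.countable.dense_compl ℂ 0)).and_eventually
      (eventually_exists_mem_innerStabilizer_apply_eq le_top h (mem_top (y - h₀)))).exists
  have hk' : IsRegular ℂ k := by
    rw [← isRegular_apply_iff he.1, hek]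
    exact not_not.mp hs
  rw [isRegular_iff_finrank_engel_eq_rank] at hk' ⊢
  refine le_antisymm ?_ (rank_le_finrank_engel ℂ _)
  rw [← hk', h]
  exact Submodule.finrank_mono (le_engel_of_mem hk)

variable {p : LieSubalgebra ℂ L}

theorem IsParabolic.engel_le (hp : IsParabolic p) {x : L} (hxp : x ∈ p)
    (hx : IsRegular ℂ x) : engel ℂ x ≤ p := by
  let f : perp p.toSubmodule →ₗ[ℂ] perp p.toSubmodule :=
    (ad ℂ L x).restrict fun y hy => lie_mem_perp_toSubmodule hxp hy
  have hker (y : L) (hy : y ∈ perp p.toSubmodule) (hxy : ⁅x, y⁆ = 0) : y = 0 :=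
    eq_zero_of_isNilpotent_ad_of_lie_eq_zero hx (hp.isNilpotent_ad hy) hxy
  have hf : Function.Injective f := (injective_iff_map_eq_zero f).mpr fun y hy =>
    Subtype.ext (hker y y.2 (congrArg Subtype.val hy))
  have hcartan := isCartanSubalgebra_engel_of_isRegular hx
  intro z hz
  suffices z ∈ perp (perp p.toSubmodule) by rwa [perp_perp] at this
  refine mem_perp.mpr fun y hy => ?_
  obtain ⟨y', hy'⟩ := LinearMap.injective_iff_surjective.mp hf ⟨y, hy⟩
  have hxy' : ⁅x, (y' : L)⁆ = y := congrArg Subtype.val hy'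
  have hzx : ⁅z, x⁆ = 0 := congrArg Subtype.val
    (trivial_lie_zero (engel ℂ x) (engel ℂ x) ⟨z, hz⟩ ⟨x, self_mem_engel ℂ x⟩)
  rw [← hxy', ← killingForm_lie_apply, hzx, map_zero, LinearMap.zero_apply]

theorem IsParabolic.eventually_exists_smul_engel_eq (hp : IsParabolic p) {x w : L}
    (hx : IsRegular ℂ x) (hxp : x ∈ p) (hw : w ∈ p) :
    ∀ᶠ s in 𝓝 (0 : ℂ), IsRegular ℂ (x + s • w) → ∃ e ∈ innerStabilizer p.toSubmodule,
      e • (engel ℂ x).toSubmodule = (engel ℂ (x + s • w)).toSubmodule := by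
  have hcartan := isCartanSubalgebra_engel_of_isRegular hx
  filter_upwards [eventually_exists_mem_innerStabilizer_apply_eq (hp.engel_le hxp hx)
    (h₀ := ⟨x, self_mem_engel ℂ x⟩) rfl hw] with s ⟨e, he, k, hk, hek⟩ hs
  have hk' : IsRegular ℂ k := by rwa [← isRegular_apply_iff he.1, hek]
  exact ⟨e, he, by rw [← engel_eq_engel_of_mem hx hk' hk, smul_engel he.1, hek]⟩

-- All but finitely many points of the line through `x` and `y` are regular, so the regular points
-- of that line are connected, and along them conjugacy is an open condition.
theorem IsParabolic.exists_smul_engel_eq (hp : IsParabolic p) {x y : L} (hx : IsRegular ℂ x)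
    (hxp : x ∈ p) (hy : IsRegular ℂ y) (hyp : y ∈ p) :
    ∃ e ∈ innerStabilizer p.toSubmodule,
      e • (engel ℂ x).toSubmodule = (engel ℂ y).toSubmodule := by
  let line (s : ℂ) : L := x + s • (y - x)
  have hline₀ : line 0 = x := by simp [line]
  have hline₁ : line 1 = y := by simp [line]
  have hreg₀ : IsRegular ℂ (line 0) := by rwa [hline₀]
  have hreg₁ : IsRegular ℂ (line 1) := by rwa [hline₁]
  have hw : y - x ∈ p := sub_mem hyp hxp
  have hfin := finite_setOf_not_isRegular_add_smul (x := x) (y := y - x) hreg₁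
  have hconn := hfin.countable.isConnected_compl_of_one_lt_rank (by simp)
  have key := hconn.isPreconnected.induction₂
    (fun s t => ∃ e ∈ innerStabilizer p.toSubmodule,
      e • (engel ℂ (line s)).toSubmodule = (engel ℂ (line t)).toSubmodule)
    (fun s hs => ?_)
    (fun s t u _ _ _ ⟨e, he, hst⟩ ⟨f, hf, htu⟩ =>
      ⟨f * e, mul_mem hf he, by rw [mul_smul, hst, htu]⟩)
    (fun s t _ _ ⟨e, he, hst⟩ => ⟨e⁻¹, inv_mem he, by rw [← hst, inv_smul_smul]⟩)
    (x := 0) (y := 1)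
    (not_not.mpr hreg₀) (not_not.mpr hreg₁)
  · rwa [hline₀, hline₁] at key
  · have hlocal := hp.eventually_exists_smul_engel_eq (not_not.mp hs)
      (add_mem hxp (p.smul_mem s hw)) hw
    have hsub : Filter.Tendsto (· - s) (𝓝 s) (𝓝 0) := by
      simpa using (continuous_sub_right s).tendsto s
    filter_upwards [mem_nhdsWithin_of_mem_nhds (hsub.eventually hlocal), self_mem_nhdsWithin]
      with t ht htreg
    have hadd : x + s • (y - x) + (t - s) • (y - x) = line t := by
      simp only [line, sub_smul]
      abel
    rw [hadd] at ht
    exact ht (not_not.mp htreg)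

theorem IsParabolic.exists_smul_cartan_eq (hp : IsParabolic p) {H H' : LieSubalgebra ℂ L}
    [H.IsCartanSubalgebra] [H'.IsCartanSubalgebra] (hH : H ≤ p) (hH' : H' ≤ p) :
    ∃ e ∈ innerStabilizer p.toSubmodule, e • H.toSubmodule = H'.toSubmodule := by
  obtain ⟨h, hh⟩ := exists_engel_eq (H := H)
  obtain ⟨h', hh'⟩ := exists_engel_eq (H := H')
  rw [← hh, ← hh']
  exact hp.exists_smul_engel_eq (isRegular_of_engel_eq hh) (hH h.2) (isRegular_of_engel_eq hh')
    (hH' h'.2)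

end Conjugacy

section LeviConjugacy

open LieAlgebra
open scoped Pointwise

variable {L : Type*} [LieRing L] [LieAlgebra ℂ L] [FiniteDimensional ℂ L]

theorem killingForm_apply_apply_of_mem_innerAut {e : L ≃ₗ[ℂ] L} (he : e ∈ innerAut L) (x y : L) :
    killingForm ℂ L (e x) (e y) = killingForm ℂ L x y :=
  let E : L ≃ₗ⁅ℂ⁆ L := { e with map_lie' := innerAut_map_lie he _ _ }
  killingForm_of_equiv_apply E x y

theorem smul_perp {e : L ≃ₗ[ℂ] L} (he : e ∈ innerAut L) (V : Submodule ℂ L) :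
    e • perp V = perp (e • V) := by
  refine Submodule.ext fun z => ?_
  obtain ⟨z, rfl⟩ := e.surjective z
  calc e z ∈ e • perp V
    _ ↔ z ∈ perp V := e.injective.mem_set_image
    _ ↔ e z ∈ perp (e • V) := by
      rw [mem_perp, mem_perp]
      refine Iff.trans (forall₂_congr fun y _ => ?_)
        (Set.forall_mem_image (f := e) (p := fun y => killingForm ℂ L (e z) y = 0)).symm
      rw [killingForm_apply_apply_of_mem_innerAut he]

variable [IsKilling ℂ L]

theorem smul_leviSubspace {p : LieSubalgebra ℂ L} (hp : IsParabolic p) {H H' : LieSubalgebra ℂ L}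
    [H.IsCartanSubalgebra] [H'.IsCartanSubalgebra] (hH : H ≤ p) (hH' : H' ≤ p)
    {e : L ≃ₗ[ℂ] L} (he : e ∈ innerStabilizer p.toSubmodule)
    (heH : e • H.toSubmodule = H'.toSubmodule) :
    e • leviSubspace H p = leviSubspace H' p := by
  have hep := innerStabilizer_smul_eq he
  have hperp : e • perp p.toSubmodule = perp p.toSubmodule := by rw [smul_perp he.1, hep]
  refine eq_leviSubspace hp hH' ?_ ?_ ?_ ?_
  · intro h hh
    obtain ⟨h, hhH, rfl⟩ : h ∈ e • H.toSubmodule := heH ▸ hh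
    rintro _ ⟨y, hy, rfl⟩
    exact ⟨⁅h, y⁆, lie_mem_leviSubspace hH (le_leviSubspace hH hhH) hy, innerAut_map_lie he.1 h y⟩
  · rw [← hep]
    exact Submodule.map_mono leviSubspace_le
  · calc e • leviSubspace H p ⊓ perp p.toSubmodule
      _ = e • leviSubspace H p ⊓ e • perp p.toSubmodule := by rw [hperp]
      _ = e • (leviSubspace H p ⊓ perp p.toSubmodule) := (Submodule.map_inf _ e.injective).symm
      _ = ⊥ := by rw [leviSubspace_inf_perp hH]; exact Submodule.map_bot _
  · rw [← hperp, ← Submodule.smul_sup', leviSubspace_sup_perp hp hH, hep]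

end LeviConjugacy

section Subspaces

open LieAlgebra LieModule

variable {L : Type*} [LieRing L] [LieAlgebra ℂ L]

theorem map_subtype_lie (s : LieSubalgebra ℂ L) (I J : LieIdeal ℂ s) :
    (⁅I, J⁆ : LieIdeal ℂ s).toSubmodule.map s.toSubmodule.subtype =
      bracketSpan L (I.toSubmodule.map s.toSubmodule.subtype)
        (J.toSubmodule.map s.toSubmodule.subtype) := by
  rw [LieSubmodule.lieIdeal_oper_eq_linear_span', Submodule.map_span]
  refine congrArg (Submodule.span ℂ) (Set.ext fun z => ⟨?_, ?_⟩)
  · rintro ⟨_, ⟨x, hx, y, hy, rfl⟩, rfl⟩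
    exact ⟨x, ⟨x, hx, rfl⟩, y, ⟨y, hy, rfl⟩, rfl⟩
  · rintro ⟨_, ⟨x, hx, rfl⟩, _, ⟨y, hy, rfl⟩, rfl⟩
    exact ⟨_, ⟨(x : s), hx, (y : s), hy, rfl⟩, rfl⟩

theorem map_subtype_top (s : LieSubalgebra ℂ L) :
    (⊤ : LieIdeal ℂ s).toSubmodule.map s.toSubmodule.subtype = s.toSubmodule :=
  Submodule.map_subtype_top _

theorem map_subtype_eq_bot_iff {s : LieSubalgebra ℂ L} {I : LieIdeal ℂ s} :
    I.toSubmodule.map s.toSubmodule.subtype = ⊥ ↔ I = ⊥ :=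
  ((Submodule.map_injective_of_injective s.toSubmodule.subtype_injective).eq_iff'
    (Submodule.map_bot _)).trans I.toSubmodule_eq_bot

theorem derivedSub_eq_map (s : LieSubalgebra ℂ L) (k : ℕ) :
    derivedSub L s.toSubmodule k =
      (derivedSeries ℂ s k).toSubmodule.map s.toSubmodule.subtype := by
  induction k with
  | zero => exact (map_subtype_top s).symm
  | succ k ih =>
    rw [derivedSub, ih, ← map_subtype_lie, derivedSeries_def, derivedSeries_def,
      derivedSeriesOfIdeal_succ]

theorem lcsSub_eq_map (s : LieSubalgebra ℂ L) (k : ℕ) :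
    lcsSub L s.toSubmodule k =
      (lowerCentralSeries ℂ s s k).toSubmodule.map s.toSubmodule.subtype := by
  induction k with
  | zero => exact (map_subtype_top s).symm
  | succ k ih =>
    rw [lcsSub, ih, lowerCentralSeries_succ, map_subtype_lie, map_subtype_top]

theorem solvableSub_iff {s : LieSubalgebra ℂ L} :
    SolvableSub L s.toSubmodule ↔ IsSolvable s := by
  simp only [SolvableSub, derivedSub_eq_map, map_subtype_eq_bot_iff, isSolvable_iff ℂ s]

theorem nilpotentSub_iff {s : LieSubalgebra ℂ L} :
    NilpotentSub L s.toSubmodule ↔ LieRing.IsNilpotent s := by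
  simp only [NilpotentSub, lcsSub_eq_map, map_subtype_eq_bot_iff]
  exact (LieModule.isNilpotent_iff ℂ s s).symm

theorem isSub_toSubmodule (s : LieSubalgebra ℂ L) : IsSub L s.toSubmodule :=
  fun _ hx _ hy => s.lie_mem hx hy

theorem IsSub.exists_toSubmodule_eq {V : Submodule ℂ L} (hV : IsSub L V) :
    ∃ s : LieSubalgebra ℂ L, s.toSubmodule = V :=
  ⟨{ V with lie_mem' := fun hx hy => hV _ hx _ hy }, rfl⟩

theorem isCartanIn_iff {p j : LieSubalgebra ℂ L} :
    IsCartanIn L p.toSubmodule j.toSubmodule ↔ IsCartanOf p j :=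
  ⟨fun ⟨_, hle, hnil, hnorm⟩ => ⟨hle, nilpotentSub_iff.mp hnil, hnorm⟩,
    fun ⟨hle, hnil, hnorm⟩ => ⟨isSub_toSubmodule j, hle, nilpotentSub_iff.mpr hnil, hnorm⟩⟩

theorem isCartanIn_top_iff {j : LieSubalgebra ℂ L} :
    IsCartanIn L ⊤ j.toSubmodule ↔ j.IsCartanSubalgebra := by
  refine ⟨fun ⟨_, _, hnil, hnorm⟩ => ⟨nilpotentSub_iff.mp hnil, le_antisymm ?_ j.le_normalizer⟩,
    fun h => ⟨isSub_toSubmodule j, le_top, nilpotentSub_iff.mpr h.nilpotent, fun x _ hx => ?_⟩⟩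
  · exact fun x hx => hnorm x trivial ((j.mem_normalizer_iff x).mp hx)
  · rw [LieSubalgebra.mem_toSubmodule, ← h.self_normalizing]
    exact (j.mem_normalizer_iff x).mpr hx

theorem isBorel_of_isBorelIn_top {b : LieSubalgebra ℂ L} (h : IsBorelIn L ⊤ b.toSubmodule) :
    IsBorel b := by
  obtain ⟨-, -, hsolv, hmax⟩ := h
  refine ⟨solvableSub_iff.mp hsolv, fun b' hb' hle => ?_⟩
  exact (hmax b'.toSubmodule (isSub_toSubmodule b') le_top (solvableSub_iff.mpr hb') hle).le

theorem isParabolic_of_isParabolicIn_top {p : LieSubalgebra ℂ L}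
    (h : IsParabolicIn L ⊤ p.toSubmodule) : IsParabolic p := by
  obtain ⟨-, -, b, hb, hbp⟩ := h
  obtain ⟨b, rfl⟩ := hb.1.exists_toSubmodule_eq
  exact ⟨b, isBorel_of_isBorelIn_top hb, hbp⟩

namespace IsParabolic

variable [FiniteDimensional ℂ L] {p : LieSubalgebra ℂ L} (hp : IsParabolic p)

include hp

theorem radicalIn_eq_centerModPerp :
    radicalIn L p.toSubmodule = (centerModPerp p).toSubmodule := by
  refine le_antisymm (sSup_le ?_) (le_sSup ⟨⟨fun x hx => hx.1, fun x hx y hy => ?_⟩, ?_⟩)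
  · rintro J ⟨⟨hJp, hJ⟩, hsolv⟩
    obtain ⟨J, rfl⟩ : ∃ J' : LieSubalgebra ℂ L, J'.toSubmodule = J :=
      IsSub.exists_toSubmodule_eq fun x hx y hy => hJ x (hJp hx) y hy
    have := solvableSub_iff.mp hsolv
    exact fun x hx => ⟨hJp hx, fun y hy =>
      lie_mem_perp_of_isSolvable (fun a ha c hc => lie_mem_comm.mp (hJ a ha c hc)) hx hy⟩
  · exact lie_mem_comm.mp (hp.lie_mem_centerModPerp hy hx)
  · exact solvableSub_iff.mpr hp.isSolvable_centerModPerp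

variable [IsKilling ℂ L]

theorem nilpotentRadIn_eq_perp : nilpotentRadIn L p.toSubmodule = perp p.toSubmodule := by
  rw [nilpotentRadIn, hp.radicalIn_eq_centerModPerp]
  refine le_antisymm (fun x ⟨hxd, hx⟩ => hp.mem_perp_of_mem_bracketSpan hx hxd)
    (le_inf hp.perp_le_bracketSpan fun x hx => ⟨hp.perp_le hx, fun y hy => ?_⟩)
  exact lie_mem_comm.mp (lie_mem_perp_toSubmodule hy hx)

theorem isCartanIn_top_of_isLanglandsIn {l j : Submodule ℂ L}
    (hl : IsLanglandsIn L ⊤ p.toSubmodule l) (hj : IsCartanIn L l j) : IsCartanIn L ⊤ j := by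
  obtain ⟨hsub, hlp, -, hinf, hsup⟩ := hl
  obtain ⟨l, rfl⟩ := hsub.exists_toSubmodule_eq
  obtain ⟨j, rfl⟩ := hj.1.exists_toSubmodule_eq
  rw [hp.nilpotentRadIn_eq_perp] at hinf hsup
  exact isCartanIn_top_iff.mpr
    ((isCartanIn_iff.mp hj).isCartanSubalgebra_of_levi hp hlp hinf hsup)

variable {H : LieSubalgebra ℂ L} [H.IsCartanSubalgebra] (hH : H ≤ p)

include hH

theorem isLanglandsIn_leviSubspace : IsLanglandsIn L ⊤ p.toSubmodule (leviSubspace H p) := by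
  refine ⟨fun x hx y hy => lie_mem_leviSubspace hH hx hy, leviSubspace_le, fun U _ hU => ?_, ?_, ?_⟩
  · obtain ⟨W, hW, hUW⟩ := exists_isCompl_of_leviSubspace hH hU
    exact ⟨W, le_top, hW, hUW.inf_eq_bot, hUW.sup_eq_top⟩
  · rw [hp.nilpotentRadIn_eq_perp, leviSubspace_inf_perp hH]
  · rw [hp.nilpotentRadIn_eq_perp, leviSubspace_sup_perp hp hH]

theorem eq_leviSubspace_of_isLanglandsIn {l : Submodule ℂ L}
    (hl : IsLanglandsIn L ⊤ p.toSubmodule l) (hHl : H.toSubmodule ≤ l) :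
    l = leviSubspace H p := by
  obtain ⟨hsub, hlp, -, hinf, hsup⟩ := hl
  rw [hp.nilpotentRadIn_eq_perp] at hinf hsup
  exact eq_leviSubspace hp hH (fun h hh => hsub h (hHl hh)) hlp hinf hsup

end IsParabolic

end Subspaces
/-- Lemma 3 of Delorme.
Let `p` be a parabolic subalgebra of a finite-dimensional complex semisimple Lie algebra
`g`, with nilpotent radical `n`.
(i) Every Cartan subalgebra `j` of `p` is a Cartan subalgebra of `g`, and there is a unique
Langlands decomposition `p = l ⊕ n` with `j ⊆ l`.
(ii) Any two Cartan subalgebras of `g` contained in `p` are conjugate by an element of the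
analytic subgroup `P` (an inner automorphism of `g` preserving `p`, since `P` is the
normalizer of `p` in `G`), which conjugates the corresponding `l` and `l'`.
(iii) For any Langlands decomposition `p = l ⊕ n`, every Cartan subalgebra of `l` is a
Cartan subalgebra of `g`. -/
theorem cartan_subalgebras_of_parabolic
    (g : Type*) [LieRing g] [LieAlgebra ℝ g] [LieAlgebra ℂ g] [IsScalarTower ℝ ℂ g]
    [FiniteDimensional ℂ g] [FiniteDimensional ℝ g] [LieAlgebra.IsSemisimple ℂ g]
    (p : Submodule ℂ g) (hp : IsParabolicIn g ⊤ p) :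
    -- (i)
    (∀ j : Submodule ℂ g, IsCartanIn g p j →
      IsCartanIn g ⊤ j ∧
      ∃ l : Submodule ℂ g, (IsLanglandsIn g ⊤ p l ∧ j ≤ l) ∧
        ∀ l' : Submodule ℂ g, IsLanglandsIn g ⊤ p l' → j ≤ l' → l' = l) ∧
    -- (ii)
    (∀ j j' : Submodule ℂ g, IsCartanIn g ⊤ j → j ≤ p → IsCartanIn g ⊤ j' → j' ≤ p →
      ∀ l l' : Submodule ℂ g,
        IsLanglandsIn g ⊤ p l → j ≤ l → IsLanglandsIn g ⊤ p l' → j' ≤ l' →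
        ∃ e ∈ innerAut g, (⇑e '' (p : Set g) = (p : Set g)) ∧
          (⇑e '' (j : Set g) = (j' : Set g)) ∧ (⇑e '' (l : Set g) = (l' : Set g))) ∧
    -- (iii)
    (∀ l : Submodule ℂ g, IsLanglandsIn g ⊤ p l →
      ∀ j : Submodule ℂ g, IsCartanIn g l j → IsCartanIn g ⊤ j) := by
  obtain ⟨p, rfl⟩ := hp.1.exists_toSubmodule_eq
  have hpar := isParabolic_of_isParabolicIn_top hp
  refine ⟨fun j hj => ?_, fun j j' hj hjp hj' hjp' l l' hl hjl hl' hjl' => ?_,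
    fun l hl j hj => hpar.isCartanIn_top_of_isLanglandsIn hl hj⟩
  · obtain ⟨j, rfl⟩ := hj.1.exists_toSubmodule_eq
    have hcartan := (isCartanIn_iff.mp hj).isCartanSubalgebra hpar
    have hjp : j ≤ p := hj.2.1
    exact ⟨isCartanIn_top_iff.mpr hcartan, leviSubspace j p,
      ⟨hpar.isLanglandsIn_leviSubspace hjp, le_leviSubspace hjp⟩,
      fun l' hl' hjl' => hpar.eq_leviSubspace_of_isLanglandsIn hjp hl' hjl'⟩
  · obtain ⟨j, rfl⟩ := hj.1.exists_toSubmodule_eq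
    obtain ⟨j', rfl⟩ := hj'.1.exists_toSubmodule_eq
    have hcartan := isCartanIn_top_iff.mp hj
    have hcartan' := isCartanIn_top_iff.mp hj'
    obtain ⟨e, he, hej⟩ := hpar.exists_smul_cartan_eq (H := j) (H' := j') hjp hjp'
    rw [hpar.eq_leviSubspace_of_isLanglandsIn hjp hl hjl,
      hpar.eq_leviSubspace_of_isLanglandsIn hjp' hl' hjl']
    exact ⟨e, he.1, congrArg SetLike.coe (innerStabilizer_smul_eq he), congrArg SetLike.coe hej,
      congrArg SetLike.coe (smul_leviSubspace hpar hjp hjp' he hej)⟩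

end ManinPaper
end

section
/- Let g be a finite-dimensional complex reductive Lie algebra, B a real (resp. complex) Manin form on g, and i a real (resp. complex) Lie subalgebra of g that is Lagrangian for B. Let r be the radical of i and set n := { X ∈ r ∩ g^der : ad_g X is nilpotent }. Then n is an ideal of i and [i, r] ⊆ n. -/
open Module

namespace ManinPaper

variable (g : Type*) [LieRing g] [LieAlgebra ℝ g] [LieAlgebra ℂ g] [IsScalarTower ℝ ℂ g]
  [FiniteDimensional ℂ g] [FiniteDimensional ℝ g]

/-! ### Bilinear forms, signature, Manin forms -/

/-- Invariance of an `ℝ`-bilinear form. -/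
def RInvariant (B : g →ₗ[ℝ] g →ₗ[ℝ] ℝ) : Prop :=
  ∀ Z X Y : g, B ⁅Z, X⁆ Y + B X ⁅Z, Y⁆ = 0

def RSymm (B : g →ₗ[ℝ] g →ₗ[ℝ] ℝ) : Prop := ∀ X Y : g, B X Y = B Y X

def CInvariant (B : g →ₗ[ℂ] g →ₗ[ℂ] ℂ) : Prop :=
  ∀ Z X Y : g, B ⁅Z, X⁆ Y + B X ⁅Z, Y⁆ = 0

def CSymm (B : g →ₗ[ℂ] g →ₗ[ℂ] ℂ) : Prop := ∀ X Y : g, B X Y = B Y X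

/-- Nondegeneracy of the restriction of a complex bilinear form to the subspace `W`. -/
def CNondegOn (B : g →ₗ[ℂ] g →ₗ[ℂ] ℂ) (W : Set g) : Prop :=
  ∀ x ∈ W, (∀ y ∈ W, B x y = 0) → x = 0

def RNondegOn (B : g →ₗ[ℝ] g →ₗ[ℝ] ℝ) (W : Set g) : Prop :=
  ∀ x ∈ W, (∀ y ∈ W, B x y = 0) → x = 0

/-- The real symmetric bilinear form `B`, restricted to the real subspace `W`, has
signature `(p, q)`. -/
def SignatureOn (B : g →ₗ[ℝ] g →ₗ[ℝ] ℝ) (W : Submodule ℝ g) (p q : ℕ) : Prop :=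
  ∃ P N : Submodule ℝ g, P ≤ W ∧ N ≤ W ∧ P ⊓ N = ⊥ ∧ P ⊔ N = W ∧
    finrank ℝ P = p ∧ finrank ℝ N = q ∧
    (∀ x ∈ P, x ≠ 0 → 0 < B x x) ∧ (∀ x ∈ N, x ≠ 0 → B x x < 0) ∧
    (∀ x ∈ P, ∀ y ∈ N, B x y = 0)

/-- A real Manin form on `g`: symmetric, invariant, of signature
`(dim_ℂ g, dim_ℂ g)`. -/
def RealManinForm (B : g →ₗ[ℝ] g →ₗ[ℝ] ℝ) : Prop :=
  RSymm g B ∧ RInvariant g B ∧ SignatureOn g B ⊤ (finrank ℂ g) (finrank ℂ g)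

/-- A complex Manin form on `g`: symmetric, invariant, nondegenerate. -/
def ComplexManinForm (B : g →ₗ[ℂ] g →ₗ[ℂ] ℂ) : Prop :=
  CSymm g B ∧ CInvariant g B ∧ CNondegOn g B Set.univ

def RIsotropic (B : g →ₗ[ℝ] g →ₗ[ℝ] ℝ) (s : Set g) : Prop :=
  ∀ x ∈ s, ∀ y ∈ s, B x y = 0

def CIsotropic (B : g →ₗ[ℂ] g →ₗ[ℂ] ℂ) (s : Set g) : Prop :=
  ∀ x ∈ s, ∀ y ∈ s, B x y = 0

/-!
After extension of scalars to an algebraically closed field, Lie's theorem yields a filtration of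
the module `V` by `L`-submodules on whose steps the solvable ideal `A` acts by characters: the
weight spaces of an ideal are stable under the whole of `L`. An element of `A` acts nilpotently on
`V` if and only if all these characters vanish on it. Each character vanishes on `⁅L, A⁆`, since the
commutator of any endomorphism with a scalar is zero. With `L = i`, `A` the radical of `i` and
`V = g`, this says that the elements of the radical acting nilpotently form an ideal containing
`⁅i, A⁆`.
-/

open LieModule (toEnd)
open LieAlgebra (IsSolvable ad derivedSeries derivedSeriesOfIdeal radical)
open scoped TensorProduct

section LieModule

variable {R L M : Type*} [CommRing R] [LieRing L] [LieAlgebra R L] [AddCommGroup M] [Module R M]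
  [LieRingModule L M] [LieModule R L M]

theorem isNilpotent_toEnd_iff_submodule_and_quotient (N : LieSubmodule R L M) (x : L) :
    IsNilpotent (toEnd R L M x) ↔
      IsNilpotent (toEnd R L N x) ∧ IsNilpotent (toEnd R L (M ⧸ N) x) := by
  have hN : ∀ m ∈ N.toSubmodule, toEnd R L M x m ∈ N.toSubmodule := fun _ ↦ N.lie_mem
  refine ⟨fun h ↦ ⟨Module.End.isNilpotent.restrict hN h, Module.End.IsNilpotent.mapQ hN h⟩, ?_⟩
  rintro ⟨⟨p, hp⟩, q, hq⟩
  refine ⟨p + q, LinearMap.ext fun m ↦ ?_⟩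
  have hmem : (toEnd R L M x ^ q) m ∈ N := by
    have hmk : Function.Semiconj (LieSubmodule.Quotient.mk' N) (toEnd R L M x)
        (toEnd R L (M ⧸ N) x) := fun _ ↦ rfl
    rw [← LieSubmodule.Quotient.mk_eq_zero, Module.End.pow_apply]
    refine (hmk.iterate_right q m).trans ?_
    rw [← Module.End.pow_apply, hq, LinearMap.zero_apply]
  have hcoe : Function.Semiconj ((↑) : N → M) (toEnd R L N x) (toEnd R L M x) := fun _ ↦ rfl
  rw [pow_add, Module.End.mul_apply, Module.End.pow_apply]
  refine (hcoe.iterate_right p ⟨_, hmem⟩).symm.trans ?_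
  rw [← Module.End.pow_apply, hp]
  rfl

end LieModule

section Weight

variable {K L V : Type*} [Field K] [LieRing L] [LieAlgebra K L] [AddCommGroup V] [Module K V]
  [LieRingModule L V] [LieModule K L V] {A : LieIdeal K L} {W : LieSubmodule K L V} [Nontrivial W]
  {χ : Dual K A}

theorem isNilpotent_toEnd_iff_weight_eq_zero (hχ : ∀ (a : A) (w : W), ⁅(a : L), w⁆ = χ a • w)
    (a : A) : IsNilpotent (toEnd K L W a) ↔ χ a = 0 := by
  have hscalar : toEnd K L W a = algebraMap K (End K W) (χ a) := LinearMap.ext (hχ a)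
  rw [hscalar, IsNilpotent.map_iff (FaithfulSMul.algebraMap_injective K (End K W)),
    isNilpotent_iff_eq_zero]

theorem weight_lie_eq_zero (hχ : ∀ (a : A) (w : W), ⁅(a : L), w⁆ = χ a • w) (x : L) (a : A) :
    χ ⁅x, a⁆ = 0 := by
  obtain ⟨w, hw⟩ := exists_ne (0 : W)
  refine (smul_eq_zero.mp ?_).resolve_right hw
  calc χ ⁅x, a⁆ • w = ⁅⁅x, (a : L)⁆, w⁆ := (hχ ⁅x, a⁆ w).symm
    _ = 0 := by rw [lie_lie, hχ, hχ, lie_smul, sub_self]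

end Weight

section IsAlgClosed

variable {K L : Type*} [Field K] [CharZero K] [IsAlgClosed K] [LieRing L] [LieAlgebra K L]
  (A : LieIdeal K L) [IsSolvable A]

theorem exists_lieSubmodule_forall_lie_eq_smul (V : Type*) [AddCommGroup V] [Module K V]
    [LieRingModule L V] [LieModule K L V] [FiniteDimensional K V] [Nontrivial V] :
    ∃ (W : LieSubmodule K L V) (χ : Dual K A), Nontrivial W ∧
      ∀ (a : A) (w : W), ⁅(a : L), w⁆ = χ a • w := by
  obtain ⟨χ, hχ⟩ := LieModule.exists_nontrivial_weightSpace_of_isSolvable K A V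
  exact ⟨LieModule.weightSpaceOfIsLieTower K V χ, χ, hχ,
    fun a w ↦ Subtype.ext ((LieModule.mem_weightSpace χ w.1).mp w.2 a)⟩

theorem exists_characters_of_isAlgClosed (V : Type*) [AddCommGroup V] [Module K V]
    [LieRingModule L V] [LieModule K L V] [FiniteDimensional K V] :
    ∃ Φ : Set (Dual K A), (∀ a : A, IsNilpotent (toEnd K L V a) ↔ ∀ χ ∈ Φ, χ a = 0) ∧
      ∀ χ ∈ Φ, ∀ (x : L) (a : A), χ ⁅x, a⁆ = 0 := by
  cases subsingleton_or_nontrivial V with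
  | inl _ => exact ⟨∅, fun a ↦ by simp [Subsingleton.elim (toEnd K L V a) 0], by simp⟩
  | inr _ =>
    obtain ⟨W, χ, _, hχ⟩ := exists_lieSubmodule_forall_lie_eq_smul A V
    obtain ⟨Φ, hΦ, hΦ_lie⟩ := exists_characters_of_isAlgClosed (V ⧸ W)
    refine ⟨insert χ Φ, fun a ↦ ?_, Set.forall_mem_insert.2 ⟨weight_lie_eq_zero hχ, hΦ_lie⟩⟩
    rw [isNilpotent_toEnd_iff_submodule_and_quotient W, isNilpotent_toEnd_iff_weight_eq_zero hχ,
      hΦ, Set.forall_mem_insert]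
termination_by finrank K V
decreasing_by
  have hpos : 0 < finrank K W.toSubmodule := finrank_pos (M := W)
  exact (Nat.lt_add_of_pos_right hpos).trans_eq W.toSubmodule.finrank_quotient_add_finrank

end IsAlgClosed

section BaseChange

section CommRing

variable {R L M : Type*} [CommRing R] [LieRing L] [LieAlgebra R L] [AddCommGroup M] [Module R M]
  [LieRingModule L M] [LieModule R L M] (S : Type*) [CommRing S] [Algebra R S]

theorem isSolvable_baseChange (A : LieIdeal R L) [IsSolvable A] : IsSolvable (A.baseChange S) := by
  obtain ⟨n, hn⟩ := IsSolvable.solvable R A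
  refine IsSolvable.mk (R := S) (k := n) ?_
  rw [LieIdeal.derivedSeries_eq_bot_iff] at hn ⊢
  rw [LieAlgebra.derivedSeriesOfIdeal_baseChange, hn, LieSubmodule.baseChange_bot]

theorem isNilpotent_toEnd_baseChange_iff [FaithfulSMul R S] [Module.Flat R M] (x : L) :
    IsNilpotent (toEnd S (S ⊗[R] L) (S ⊗[R] M) (1 ⊗ₜ x)) ↔ IsNilpotent (toEnd R L M x) := by
  have hinj : Function.Injective (End.baseChangeHom R S M) :=
    LinearMap.baseChangeHom_injective R M S
  rw [LieModule.toEnd_baseChange]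
  exact IsNilpotent.map_iff hinj

end CommRing

variable {k L V : Type*} [Field k] [CharZero k] [LieRing L] [LieAlgebra k L] [AddCommGroup V]
  [Module k V] [LieRingModule L V] [LieModule k L V] [FiniteDimensional k V]
  (A : LieIdeal k L) [IsSolvable A]

variable (V) in
theorem exists_characters :
    ∃ Φ : Set (A →ₗ[k] AlgebraicClosure k),
      (∀ a : A, IsNilpotent (toEnd k L V a) ↔ ∀ χ ∈ Φ, χ a = 0) ∧
      ∀ χ ∈ Φ, ∀ (x : L) (a : A), χ ⁅x, a⁆ = 0 := by
  let K := AlgebraicClosure k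
  have := isSolvable_baseChange K A
  obtain ⟨Φ, hΦ, hΦ_lie⟩ := exists_characters_of_isAlgClosed (A.baseChange K) (K ⊗[k] V)
  let ι : A →ₗ[k] A.baseChange K :=
    (A.toSubmodule.toBaseChange K).restrictScalars k ∘ₗ TensorProduct.mk k K A 1
  have hι (x : L) (a : A) : ι ⁅x, a⁆ = ⁅(1 : K) ⊗ₜ[k] x, ι a⁆ := by
    have htmul : (1 : K) ⊗ₜ[k] ⁅x, (a : L)⁆ = ⁅(1 : K) ⊗ₜ[k] x, (1 : K) ⊗ₜ[k] (a : L)⁆ := by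
      rw [LieAlgebra.ExtendScalars.bracket_tmul, one_mul]
    exact Subtype.ext htmul
  refine ⟨(fun χ : Dual K _ ↦ χ.restrictScalars k ∘ₗ ι) '' Φ, fun a ↦ ?_,
    Set.forall_mem_image.2 fun χ hχ x a ↦ ?_⟩
  · rw [← isNilpotent_toEnd_baseChange_iff K, Set.forall_mem_image]
    exact hΦ (ι a)
  · exact (congrArg χ (hι x a)).trans (hΦ_lie χ hχ (1 ⊗ₜ x) (ι a))

variable {A}

theorem isNilpotent_toEnd_add {a b : L} (ha : a ∈ A) (hb : b ∈ A)
    (hna : IsNilpotent (toEnd k L V a)) (hnb : IsNilpotent (toEnd k L V b)) :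
    IsNilpotent (toEnd k L V (a + b)) := by
  obtain ⟨Φ, hΦ, -⟩ := exists_characters V A
  refine (hΦ (⟨a, ha⟩ + ⟨b, hb⟩)).2 fun χ hχ ↦ ?_
  rw [map_add, (hΦ ⟨a, ha⟩).1 hna χ hχ, (hΦ ⟨b, hb⟩).1 hnb χ hχ, add_zero]

variable (V) in
theorem isNilpotent_toEnd_lie (x : L) {a : L} (ha : a ∈ A) : IsNilpotent (toEnd k L V ⁅x, a⁆) := by
  obtain ⟨Φ, hΦ, hΦ_lie⟩ := exists_characters V A
  exact (hΦ ⁅x, ⟨a, ha⟩⁆).2 fun χ hχ ↦ hΦ_lie χ hχ x ⟨a, ha⟩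

end BaseChange

section LieSubalgebra

variable {k 𝔤 : Type*} [CommRing k] [LieRing 𝔤] [LieAlgebra k 𝔤] {I : LieSubalgebra k 𝔤}

/-- An ideal of a Lie subalgebra of `𝔤`, viewed as a subspace of `𝔤`; it translates between
Mathlib's bundled ideals and notions such as `radicalIn`, which are phrased for subspaces. -/
abbrev ambient (A : LieIdeal k I) : Submodule k 𝔤 :=
  A.toSubmodule.map (I.incl : I →ₗ[k] 𝔤)

/-- The set `n = {X ∈ r ∩ [𝔤, 𝔤] | ad X nilpotent}` attached to a subspace `r` of `𝔤`, over
arbitrary scalars `k` so as to cover real and complex subalgebras alike. -/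
def nilpotentPart (r : Submodule k 𝔤) : Set 𝔤 :=
  {X | X ∈ r ∧ X ∈ derivedSeries k 𝔤 1 ∧ IsNilpotent (ad k 𝔤 X)}

theorem ambient_eq_bot_iff (A : LieIdeal k I) : ambient A = ⊥ ↔ A = ⊥ :=
  ((Submodule.map_injective_of_injective Subtype.val_injective).eq_iff' (Submodule.map_bot _)).trans
    (LieSubmodule.toSubmodule_eq_bot A)

theorem ambient_derivedSeriesOfIdeal_succ (A : LieIdeal k I) (n : ℕ) :
    ambient (derivedSeriesOfIdeal k I (n + 1) A) =
      Submodule.span k {z | ∃ x ∈ ambient (derivedSeriesOfIdeal k I n A),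
        ∃ y ∈ ambient (derivedSeriesOfIdeal k I n A), ⁅x, y⁆ = z} := by
  rw [LieAlgebra.derivedSeriesOfIdeal_succ, ambient, LieSubmodule.lieIdeal_oper_eq_linear_span',
    Submodule.map_span]
  congr 1
  ext z
  constructor
  · rintro ⟨_, ⟨x, hx, y, hy, rfl⟩, rfl⟩
    exact ⟨x, ⟨x, hx, rfl⟩, y, ⟨y, hy, rfl⟩, rfl⟩
  · rintro ⟨_, ⟨x, hx, rfl⟩, _, ⟨y, hy, rfl⟩, rfl⟩
    exact ⟨_, ⟨x, hx, y, hy, rfl⟩, rfl⟩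

theorem exists_ambient_derivedSeriesOfIdeal_eq_bot_iff (A : LieIdeal k I) :
    (∃ n, ambient (derivedSeriesOfIdeal k I n A) = ⊥) ↔ IsSolvable A := by
  simp only [ambient_eq_bot_iff, LieAlgebra.isSolvable_iff k, LieIdeal.derivedSeries_eq_bot_iff]

theorem sSup_solvable_ideals_eq_ambient_radical [IsNoetherian k 𝔤]
    {S : Submodule k 𝔤 → Prop} (hS : ∀ A : LieIdeal k I, S (ambient A) ↔ IsSolvable A) :
    sSup {J | (J ≤ I.toSubmodule ∧ ∀ x ∈ I, ∀ y ∈ J, ⁅x, y⁆ ∈ J) ∧ S J} =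
      ambient (radical k I) := by
  refine le_antisymm (sSup_le ?_)
    (le_sSup ⟨⟨Submodule.map_subtype_le _ _, ?_⟩, (hS _).2 inferInstance⟩)
  · rintro J ⟨⟨hJI, hJ⟩, hSJ⟩
    let A : LieIdeal k I :=
      { J.comap (I.incl : I →ₗ[k] 𝔤) with lie_mem := fun {x y} hy ↦ hJ x x.2 y hy }
    have hA : ambient A = J := (Submodule.map_comap_subtype _ _).trans (inf_eq_right.2 hJI)
    rw [← hA, hS, LieAlgebra.LieIdeal.solvable_iff_le_radical] at hSJ
    exact hA ▸ Submodule.map_mono hSJ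
  · rintro x hx _ ⟨y, hy, rfl⟩
    exact ⟨⁅⟨x, hx⟩, y⁆, (radical k I).lie_mem hy, rfl⟩

end LieSubalgebra

section RestrictScalars

variable (R : Type*) {L : Type*} [CommRing R] [LieRing L] [LieAlgebra R L]

theorem isNilpotent_ad_iff_iterate (x : L) :
    IsNilpotent (ad R L x) ↔ ∃ n : ℕ, ∀ y, (⁅x, ·⁆ : L → L)^[n] y = 0 := by
  simp only [IsNilpotent, LinearMap.ext_iff, Module.End.pow_apply, LinearMap.zero_apply]
  rfl

theorem coe_derivedSeries_one_eq_derivedOf_top [LieAlgebra ℂ L] :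
    (derivedSeries R L 1 : Set L) = derivedOf L ⊤ := by
  calc (derivedSeries R L 1 : Set L)
    _ = derivedSeries ℂ L 1 :=
      (LieIdeal.coe_derivedSeries_eq_int 1).trans (LieIdeal.coe_derivedSeries_eq_int 1).symm
    _ = Submodule.span ℂ {⁅x, y⁆ | (x : L) (y : L)} :=
      congrArg SetLike.coe (LieAlgebra.coe_derivedSeries_one_eq ℂ L)
    _ = derivedOf L ⊤ := by simp only [derivedOf, bracketSpan, Submodule.mem_top, true_and]

theorem mem_nilpotentPart_iff {k 𝔤 : Type*} [CommRing k] [LieRing 𝔤] [LieAlgebra k 𝔤]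
    [LieAlgebra ℂ 𝔤] {r : Submodule k 𝔤} {X : 𝔤} :
    X ∈ nilpotentPart r ↔ X ∈ r ∧ X ∈ derivedOf 𝔤 ⊤ ∧ IsNilpotent (ad ℂ 𝔤 X) := by
  rw [isNilpotent_ad_iff_iterate, ← isNilpotent_ad_iff_iterate k,
    ← SetLike.mem_coe (p := derivedOf 𝔤 ⊤), ← coe_derivedSeries_one_eq_derivedOf_top k]
  rfl

end RestrictScalars

section Radical

variable {𝔤 : Type*} [LieRing 𝔤]

theorem derivedSub_ambient [LieAlgebra ℂ 𝔤] {I : LieSubalgebra ℂ 𝔤} (A : LieIdeal ℂ I) (n : ℕ) :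
    derivedSub 𝔤 (ambient A) n = ambient (derivedSeriesOfIdeal ℂ I n A) := by
  induction n with
  | zero => rfl
  | succ n ih => rw [derivedSub, bracketSpan, ih, ambient_derivedSeriesOfIdeal_succ]

theorem derivedSubR_ambient [LieAlgebra ℝ 𝔤] {I : LieSubalgebra ℝ 𝔤} (A : LieIdeal ℝ I) (n : ℕ) :
    derivedSubR 𝔤 (ambient A) n = ambient (derivedSeriesOfIdeal ℝ I n A) := by
  induction n with
  | zero => rfl
  | succ n ih => rw [derivedSubR, bracketSpanR, ih, ambient_derivedSeriesOfIdeal_succ]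

theorem radicalIn_eq_ambient_radical [LieAlgebra ℂ 𝔤] [FiniteDimensional ℂ 𝔤]
    (I : LieSubalgebra ℂ 𝔤) : radicalIn 𝔤 I.toSubmodule = ambient (radical ℂ I) :=
  sSup_solvable_ideals_eq_ambient_radical fun A ↦ by
    simp only [SolvableSub, derivedSub_ambient, exists_ambient_derivedSeriesOfIdeal_eq_bot_iff]

theorem radicalInR_eq_ambient_radical [LieAlgebra ℝ 𝔤] [FiniteDimensional ℝ 𝔤]
    (I : LieSubalgebra ℝ 𝔤) : radicalInR 𝔤 I.toSubmodule = ambient (radical ℝ I) :=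
  sSup_solvable_ideals_eq_ambient_radical fun A ↦ by
    simp only [SolvableSubR, derivedSubR_ambient, exists_ambient_derivedSeriesOfIdeal_eq_bot_iff]

end Radical

theorem nilpotent_part_of_radical_is_ideal_general {k 𝔤 : Type*} [Field k] [CharZero k]
    [LieRing 𝔤] [LieAlgebra k 𝔤] [FiniteDimensional k 𝔤] (I : LieSubalgebra k 𝔤) (A : LieIdeal k I)
    [IsSolvable A] :
    (∀ X ∈ nilpotentPart (ambient A), X ∈ I) ∧
    (∀ X Y, X ∈ nilpotentPart (ambient A) → Y ∈ nilpotentPart (ambient A) →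
      X + Y ∈ nilpotentPart (ambient A)) ∧
    (∀ (c : k), ∀ X ∈ nilpotentPart (ambient A), c • X ∈ nilpotentPart (ambient A)) ∧
    (∀ X ∈ I, ∀ Y ∈ nilpotentPart (ambient A), ⁅X, Y⁆ ∈ nilpotentPart (ambient A)) ∧
    (∀ X ∈ I, ∀ Y ∈ ambient A, ⁅X, Y⁆ ∈ nilpotentPart (ambient A)) := by
  have lie_mem : ∀ X ∈ I, ∀ Y ∈ ambient A, ⁅X, Y⁆ ∈ nilpotentPart (ambient A) := by
    rintro X hX _ ⟨a, ha, rfl⟩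
    refine ⟨⟨⁅⟨X, hX⟩, a⁆, A.lie_mem ha, rfl⟩, ?_, isNilpotent_toEnd_lie 𝔤 (⟨X, hX⟩ : I) ha⟩
    exact LieSubmodule.lie_mem_lie (LieSubmodule.mem_top X) (LieSubmodule.mem_top _)
  refine ⟨fun X hX ↦ Submodule.map_subtype_le _ _ hX.1, ?_, ?_,
    fun X hX Y hY ↦ lie_mem X hX Y hY.1, lie_mem⟩
  · rintro _ _ ⟨⟨a, ha, rfl⟩, hda, hna⟩ ⟨⟨b, hb, rfl⟩, hdb, hnb⟩
    exact ⟨⟨a + b, A.add_mem ha hb, rfl⟩, add_mem hda hdb,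
      isNilpotent_toEnd_add (L := I) (V := 𝔤) ha hb hna hnb⟩
  · rintro c X ⟨hA, hd, hn⟩
    exact ⟨Submodule.smul_mem _ c hA, SMulMemClass.smul_mem c hd, map_smul (ad k 𝔤) c X ▸ hn.smul c⟩

/-- Lemma 8 of Delorme.
Let `g` be complex reductive, `B` a real (resp. complex) Manin form and `i` a real
(resp. complex) Lagrangian Lie subalgebra for `B`.  With `r` the radical of `i` and
`n = {X ∈ r ∩ g^der | ad X nilpotent}`, the set `n` is an ideal of `i` and `[i, r] ⊆ n`. -/
theorem nilpotent_part_of_radical_is_ideal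
    (g : Type*) [LieRing g] [LieAlgebra ℝ g] [LieAlgebra ℂ g] [IsScalarTower ℝ ℂ g]
    [FiniteDimensional ℂ g] [FiniteDimensional ℝ g]
    (hred : IsReductive g) :
    -- real case
    (∀ B : g →ₗ[ℝ] g →ₗ[ℝ] ℝ, RealManinForm g B →
      ∀ i : Submodule ℝ g, IsSubR g i → RIsotropic g B i →
        finrank ℝ i = finrank ℂ g →
        (∀ X, (X ∈ radicalInR g i ∧ X ∈ derivedOf g ⊤ ∧
            IsNilpotent (LieAlgebra.ad ℂ g X)) → X ∈ i) ∧
        (∀ X Y, (X ∈ radicalInR g i ∧ X ∈ derivedOf g ⊤ ∧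
            IsNilpotent (LieAlgebra.ad ℂ g X)) →
          (Y ∈ radicalInR g i ∧ Y ∈ derivedOf g ⊤ ∧ IsNilpotent (LieAlgebra.ad ℂ g Y)) →
          (X + Y ∈ radicalInR g i ∧ X + Y ∈ derivedOf g ⊤ ∧
            IsNilpotent (LieAlgebra.ad ℂ g (X + Y)))) ∧
        (∀ (c : ℝ) (X), (X ∈ radicalInR g i ∧ X ∈ derivedOf g ⊤ ∧
            IsNilpotent (LieAlgebra.ad ℂ g X)) →
          (c • X ∈ radicalInR g i ∧ c • X ∈ derivedOf g ⊤ ∧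
            IsNilpotent (LieAlgebra.ad ℂ g (c • X)))) ∧
        (∀ X ∈ i, ∀ Y, (Y ∈ radicalInR g i ∧ Y ∈ derivedOf g ⊤ ∧
            IsNilpotent (LieAlgebra.ad ℂ g Y)) →
          (⁅X, Y⁆ ∈ radicalInR g i ∧ ⁅X, Y⁆ ∈ derivedOf g ⊤ ∧
            IsNilpotent (LieAlgebra.ad ℂ g ⁅X, Y⁆))) ∧
        (∀ X ∈ i, ∀ Y ∈ radicalInR g i,
          (⁅X, Y⁆ ∈ radicalInR g i ∧ ⁅X, Y⁆ ∈ derivedOf g ⊤ ∧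
            IsNilpotent (LieAlgebra.ad ℂ g ⁅X, Y⁆)))) ∧
    -- complex case
    (∀ B : g →ₗ[ℂ] g →ₗ[ℂ] ℂ, ComplexManinForm g B →
      ∀ i : Submodule ℂ g, IsSub g i → CIsotropic g B i →
        finrank ℝ (i.restrictScalars ℝ) = finrank ℂ g →
        (∀ X, (X ∈ radicalIn g i ∧ X ∈ derivedOf g ⊤ ∧
            IsNilpotent (LieAlgebra.ad ℂ g X)) → X ∈ i) ∧
        (∀ X Y, (X ∈ radicalIn g i ∧ X ∈ derivedOf g ⊤ ∧
            IsNilpotent (LieAlgebra.ad ℂ g X)) →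
          (Y ∈ radicalIn g i ∧ Y ∈ derivedOf g ⊤ ∧ IsNilpotent (LieAlgebra.ad ℂ g Y)) →
          (X + Y ∈ radicalIn g i ∧ X + Y ∈ derivedOf g ⊤ ∧
            IsNilpotent (LieAlgebra.ad ℂ g (X + Y)))) ∧
        (∀ (c : ℂ) (X), (X ∈ radicalIn g i ∧ X ∈ derivedOf g ⊤ ∧
            IsNilpotent (LieAlgebra.ad ℂ g X)) →
          (c • X ∈ radicalIn g i ∧ c • X ∈ derivedOf g ⊤ ∧
            IsNilpotent (LieAlgebra.ad ℂ g (c • X)))) ∧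
        (∀ X ∈ i, ∀ Y, (Y ∈ radicalIn g i ∧ Y ∈ derivedOf g ⊤ ∧
            IsNilpotent (LieAlgebra.ad ℂ g Y)) →
          (⁅X, Y⁆ ∈ radicalIn g i ∧ ⁅X, Y⁆ ∈ derivedOf g ⊤ ∧
            IsNilpotent (LieAlgebra.ad ℂ g ⁅X, Y⁆))) ∧
        (∀ X ∈ i, ∀ Y ∈ radicalIn g i,
          (⁅X, Y⁆ ∈ radicalIn g i ∧ ⁅X, Y⁆ ∈ derivedOf g ⊤ ∧
            IsNilpotent (LieAlgebra.ad ℂ g ⁅X, Y⁆)))) := by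
  simp only [← mem_nilpotentPart_iff]
  exact ⟨fun _ _ i hi _ _ ↦ radicalInR_eq_ambient_radical ⟨i, fun hX hY ↦ hi _ hX _ hY⟩ ▸
      nilpotent_part_of_radical_is_ideal_general _ _,
    fun _ _ i hi _ _ ↦ radicalIn_eq_ambient_radical ⟨i, fun hX hY ↦ hi _ hX _ hY⟩ ▸
      nilpotent_part_of_radical_is_ideal_general _ _⟩

end ManinPaper
end
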